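/- arXiv:1806.03523 — 8 statements merged into one kernel-verified Lean document; each statement's English description precedes it below -/
import Mathlib

section
/- Let a and b be ideals of R linked by I over M (i.e., I ⊆ a ∩ b is generated by an M-regular sequence, bM = IM :_M a, and aM = IM :_M b, with aM ≠ M ≠ bM). Then √(I + Ann_R M) = √((a ∩ b) + Ann_R M). -/
universe u

open RingTheory.Sequence CategoryTheory

noncomputable section

/-- `N :_M a`, set of `m : M` with `a • m ⊆ N`. -/
def Submodule.modColon {R : Type u} [CommRing R] {M : Type u} [AddCommGroup M] [Module R M]
    (N : Submodule R M) (a : Ideal R) : Submodule R M :=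
  ⨅ r ∈ a, N.comap (LinearMap.lsmul R M r)

/-- The ideals `a` and `b` are linked by `I` over `M`: `I ⊆ a ⊓ b` is generated by an
`M`-regular sequence, `bM = IM :_M a`, `aM = IM :_M b`, and `aM ≠ M ≠ bM`. -/
def Ideal.IsLinkedBy {R : Type u} [CommRing R] (M : Type u) [AddCommGroup M] [Module R M]
    (I a b : Ideal R) : Prop :=
  (∃ rs : List R, RingTheory.Sequence.IsRegular M rs ∧ I = Ideal.ofList rs) ∧
  I ≤ a ⊓ b ∧
  a • (⊤ : Submodule R M) ≠ ⊤ ∧ b • (⊤ : Submodule R M) ≠ ⊤ ∧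
  Submodule.modColon (I • (⊤ : Submodule R M)) a = b • (⊤ : Submodule R M) ∧
  Submodule.modColon (I • (⊤ : Submodule R M)) b = a • (⊤ : Submodule R M)

/-- Cohomological dimension `cd(a, M) = sup { i | H^i_a(M) ≠ 0 }`. -/
def cohDim {R : Type u} [CommRing R] (a : Ideal R) (M : Type u) [AddCommGroup M]
    [Module R M] : ℕ∞ :=
  sSup {n : ℕ∞ | ∃ i : ℕ, n = i ∧ Nontrivial ↥((localCohomology a i).obj (ModuleCat.of R M))}

/-- `grade_M(a)`: the supremum of lengths of `M`-regular sequences contained in `a`. -/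
def gradeM {R : Type u} [CommRing R] (a : Ideal R) (M : Type u) [AddCommGroup M]
    [Module R M] : ℕ :=
  sSup {n : ℕ | ∃ rs : List R, rs.length = n ∧ (∀ r ∈ rs, r ∈ a) ∧
    RingTheory.Sequence.IsRegular M rs}

variable {R : Type u} [CommRing R] [IsNoetherianRing R]
variable {M : Type u} [AddCommGroup M] [Module R M] [Module.Finite R M] [Nontrivial M]

theorem stmt1 (I a b : Ideal R) (h : Ideal.IsLinkedBy M I a b) :
    (I + Module.annihilator R M).radical = ((a ⊓ b) + Module.annihilator R M).radical := by
  obtain ⟨-, hI, -, -, hb, -⟩ := h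
  have hsupp : (Module.annihilator R (M ⧸ (I • ⊤ : Submodule R M))).radical =
      (I + Module.annihilator R M).radical := by
    rw [← PrimeSpectrum.zeroLocus_eq_iff, ← Module.support_eq_zeroLocus, Module.support_quotient,
      Module.support_eq_zeroLocus, Submodule.add_eq_sup, PrimeSpectrum.zeroLocus_sup,
      Set.inter_comm]
  apply le_antisymm
  · exact Ideal.radical_mono (sup_le_sup_right hI _)
  · rw [Ideal.radical_le_radical_iff]
    refine sup_le ?_ (le_sup_right.trans Ideal.le_radical)
    rw [← hsupp]
    intro x hx
    refine ⟨2, ?_⟩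
    rw [Module.mem_annihilator]
    intro q
    obtain ⟨m, rfl⟩ := Submodule.mkQ_surjective _ q
    rw [← map_smul, Submodule.mkQ_apply, Submodule.Quotient.mk_eq_zero]
    have hm : x • m ∈ b • (⊤ : Submodule R M) := Submodule.smul_mem_smul hx.2 trivial
    rw [← hb] at hm
    simp only [Submodule.modColon, Submodule.mem_iInf] at hm
    have := hm x hx.1
    rw [pow_two, mul_smul]
    exact this
end
end

section
/- Let a and b be ideals of R linked by the zero ideal over M, i.e., bM = 0 :_M a and aM = 0 :_M b, with aM ≠ M ≠ bM. Then √(Ann_R(M) :_R a) = √(Ann_R(aM)) = √(b + Ann_R M). -/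
universe u

open RingTheory.Sequence CategoryTheory

noncomputable section

variable {R : Type u} [CommRing R] [IsNoetherianRing R]
variable {M : Type u} [AddCommGroup M] [Module R M] [Module.Finite R M] [Nontrivial M]

theorem stmt2 (a b : Ideal R) (h : Ideal.IsLinkedBy M ⊥ a b) :
    ((Module.annihilator R M).colon a).radical =
        ((a • (⊤ : Submodule R M)).annihilator).radical ∧
      ((a • (⊤ : Submodule R M)).annihilator).radical =
        (b + Module.annihilator R M).radical := by
  have h1 : (Module.annihilator R M).colon a = (a • (⊤ : Submodule R M)).annihilator := by
    ext r
    rw [Submodule.mem_colon, Submodule.mem_annihilator]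
    constructor
    · intro hr n hn
      refine Submodule.smul_induction_on hn ?_ ?_
      · intro x hx m _
        have := Module.mem_annihilator.1 (hr x hx) m
        rwa [smul_eq_mul, mul_smul] at this
      · intro x y hx hy
        rw [smul_add, hx, hy, add_zero]
    · intro hr x hx
      rw [Module.mem_annihilator]
      intro m
      rw [smul_eq_mul, mul_smul]
      exact hr _ (Submodule.smul_mem_smul hx trivial)
  obtain ⟨-, -, -, -, hb, ha⟩ := h
  rw [Submodule.bot_smul] at ha hb
  refine ⟨by rw [h1], le_antisymm ?_ ?_⟩
  · rw [Ideal.radical_le_radical_iff]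
    intro r hr
    rw [Submodule.mem_annihilator] at hr
    have hle : LinearMap.range (algebraMap R (Module.End R M) r) ≤ b • (⊤ : Submodule R M) := by
      rintro _ ⟨m, rfl⟩
      rw [← hb]
      simp only [Submodule.modColon, Submodule.mem_iInf, Submodule.mem_comap, Submodule.mem_bot]
      intro s hs
      have := hr (s • m) (Submodule.smul_mem_smul hs trivial)
      simpa using this
    obtain ⟨p, hp, hdeg, hc, h0⟩ :=
      LinearMap.exists_monic_and_natDegree_eq_and_coeff_mem_pow_and_aeval_eq_zero R _ b hle
    rw [Polynomial.aeval_algebraMap_apply] at h0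
    have hann : p.eval r ∈ Module.annihilator R M := by
      rw [Module.mem_annihilator]
      intro m
      simpa using LinearMap.congr_fun h0 m
    refine ⟨p.natDegree, ?_⟩
    have hsum := hp.as_sum
    have he := congrArg (Polynomial.eval r) hsum
    rw [Polynomial.eval_add, Polynomial.eval_pow, Polynomial.eval_X,
      Polynomial.eval_finsetSum] at he
    have hmem : ∑ i ∈ Finset.range p.natDegree,
        Polynomial.eval r (Polynomial.C (p.coeff i) * Polynomial.X ^ i) ∈ b := by
      refine Ideal.sum_mem _ fun i hi => ?_
      have hi' := Finset.mem_range.1 hi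
      simp only [Polynomial.eval_mul, Polynomial.eval_C]
      exact Ideal.mul_mem_right _ _ (Ideal.pow_le_self (Nat.sub_ne_zero_of_lt hi') (hc i))
    rw [← sub_eq_iff_eq_add] at he
    rw [← he]
    exact Ideal.sub_mem _ (Ideal.mem_sup_right hann) (Ideal.mem_sup_left hmem)
  · apply Ideal.radical_mono
    rw [← h1]
    refine sup_le ?_ ?_
    · intro r hr
      rw [h1, Submodule.mem_annihilator]
      intro n hn
      rw [← ha] at hn
      simp only [Submodule.modColon, Submodule.mem_iInf, Submodule.mem_comap,
        Submodule.mem_bot] at hn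
      exact hn r hr
    · intro r hr
      rw [Submodule.mem_colon]
      intro x _
      exact Ideal.mul_mem_right _ _ hr
end
end

section
/- Let a and b be ideals linked by I over M, where I is generated by an M-regular sequence of length t = grade_M(I). Then cd(a + b, M) ≤ max{cd(a, M), cd(b, M), t + 1}, where cd(c, M) := sup{i : H^i_c(M) ≠ 0} is the cohomological dimension. -/
universe u

open RingTheory.Sequence CategoryTheory

noncomputable section

namespace Lnk
open Limits Opposite

section Rel
variable {R : Type u} [CommRing R]

def Rel (K : CochainComplex (ModuleCat.{u} R) ℕ) (n : ℕ) (x : K.X n) (h : K.homology n) : Prop :=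
  ∃ z : K.cycles n, K.iCycles n z = x ∧ K.homologyπ n z = h

lemma rel_surj (K : CochainComplex (ModuleCat.{u} R) ℕ) (n : ℕ) (h : K.homology n) :
    ∃ x : K.X n, K.d n (n+1) x = 0 ∧ Rel K n x h := by
  obtain ⟨z, hz⟩ := (ModuleCat.epi_iff_surjective (K.homologyπ n)).1 inferInstance h
  refine ⟨K.iCycles n z, ?_, z, rfl, hz⟩
  rw [← ConcreteCategory.comp_apply, K.iCycles_d]
  rfl

lemma rel_exists (K : CochainComplex (ModuleCat.{u} R) ℕ) (n : ℕ) (x : K.X n)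
    (hx : K.d n (n+1) x = 0) : ∃ h, Rel K n x h := by
  have := K.cyclesIsKernel n (n+1) (by simp)
  let z : ModuleCat.of R R ⟶ K.cycles n := K.liftCycles
    (ModuleCat.ofHom (LinearMap.toSpanSingleton R (K.X n) x)) (n+1) (by simp) (by
      ext
      simpa using hx)
  refine ⟨_, z 1, ?_, rfl⟩
  rw [← ConcreteCategory.comp_apply, K.liftCycles_i]
  simp

lemma rel_zero (K : CochainComplex (ModuleCat.{u} R) ℕ) (n p : ℕ) (hp : p + 1 = n) (x : K.X n)
    (h : K.homology n) (hr : Rel K n x h) : h = 0 ↔ ∃ y : K.X p, K.d p n y = x := by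
  obtain ⟨z, rfl, rfl⟩ := hr
  have hex : (ShortComplex.mk _ _ (K.toCycles_comp_homologyπ p n)).Exact :=
    ShortComplex.exact_of_g_is_cokernel _ (K.homologyIsCokernel p n (by simp [← hp]))
  rw [ShortComplex.moduleCat_exact_iff] at hex
  have hinj : Function.Injective (K.iCycles n) :=
    (ModuleCat.mono_iff_injective (K.iCycles n)).1 inferInstance
  constructor
  · intro h0
    obtain ⟨y, hy⟩ := hex z h0
    refine ⟨y, ?_⟩
    rw [← K.toCycles_i, ConcreteCategory.comp_apply]
    exact congrArg _ hy
  · rintro ⟨y, hy⟩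
    rw [← K.toCycles_i, ConcreteCategory.comp_apply] at hy
    rw [← hinj hy, ← ConcreteCategory.comp_apply, K.toCycles_comp_homologyπ]
    rfl

lemma rel_nat {K L : CochainComplex (ModuleCat.{u} R) ℕ} (φ : K ⟶ L) (n : ℕ) (x : K.X n)
    (h : K.homology n) (hr : Rel K n x h) :
    Rel L n (φ.f n x) (HomologicalComplex.homologyMap φ n h) := by
  obtain ⟨z, rfl, rfl⟩ := hr
  refine ⟨HomologicalComplex.cyclesMap φ n z, ?_, ?_⟩
  · rw [← ConcreteCategory.comp_apply, HomologicalComplex.cyclesMap_i]; rfl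
  · rw [← ConcreteCategory.comp_apply, ← ConcreteCategory.comp_apply,
      HomologicalComplex.homologyπ_naturality]
end Rel

section Bridge
variable {R : Type u} [CommRing R]

/-- map on Hom complexes -/
def yMap {P Q : ChainComplex (ModuleCat.{u} R) ℕ} (φ : P ⟶ Q) (Y : ModuleCat.{u} R) :
    Q.linearYonedaObj R Y ⟶ P.linearYonedaObj R Y :=
  (HomologicalComplex.unopFunctor _ _).map
    ((((linearYoneda R (ModuleCat.{u} R)).obj Y).rightOp.mapHomologicalComplex _).map φ).op

lemma yMap_f {P Q : ChainComplex (ModuleCat.{u} R) ℕ} (φ : P ⟶ Q) (Y : ModuleCat.{u} R) (n : ℕ)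
    (f : Q.X n ⟶ Y) : (yMap φ Y).f n f = φ.f n ≫ f := rfl

lemma sq_aux {C : Type*} [Category* C] {A B D A' B' D' : C} {t : A ⟶ A'} {a' : A' ⟶ B'}
    {a : A ⟶ B} {m : B ⟶ B'} {b : B ⟶ D} {b' : B' ⟶ D'} {c : D ⟶ D'}
    (h1 : t ≫ a' = a ≫ m) (h2 : m ≫ b' = b ≫ c) : t ≫ (a' ≫ b') = (a ≫ b) ≫ c := by
  rw [← Category.assoc, h1, Category.assoc, h2, Category.assoc]

lemma sq_inv {C : Type*} [Category* C] {A B A' B' : C} {α : A ≅ B} {β : A' ≅ B'}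
    {m : A ⟶ A'} {c : B ⟶ B'} (h : m ≫ β.hom = α.hom ≫ c) : c ≫ β.inv = α.inv ≫ m := by
  rw [Iso.comp_inv_eq, Category.assoc, Iso.eq_inv_comp, h]

lemma isoExt_nat {X X' : ModuleCat.{u} R} (P : ProjectiveResolution X)
    (P' : ProjectiveResolution X') (g : X' ⟶ X) (φ : ProjectiveResolution.Hom P' P g)
    (n : ℕ) (Y : ModuleCat.{u} R) :
    ((_root_.Ext R (ModuleCat.{u} R) n).map g.op).app Y ≫ (P'.isoExt n Y).hom =
      (P.isoExt n Y).hom ≫ HomologicalComplex.homologyMap (yMap φ.hom Y) n := by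
  have h1 := ProjectiveResolution.isoLeftDerivedObj_inv_naturality g P' P φ.hom (by
    simpa using! φ.hom_f_zero_comp_π_f_zero) ((linearYoneda R (ModuleCat.{u} R)).obj Y).rightOp n
  have h2 := HomologicalComplex.homologyOp_hom_naturality (yMap φ.hom Y) n
  have h2' := sq_inv h2
  exact sq_aux (congrArg Quiver.Hom.unop h1) (congrArg Quiver.Hom.unop h2').symm

/-- `ξ` in the classical Ext and `η` in the derived-category Ext come from the same cocycle. -/
def T {X Y : ModuleCat.{u} R} {n : ℕ}
    (ξ : ((_root_.Ext R (ModuleCat.{u} R) n).obj (op X)).obj Y) (η : Abelian.Ext X Y n) : Prop :=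
  ∃ (f : (projectiveResolution X).complex.X n ⟶ Y)
    (hf : (projectiveResolution X).complex.d (n+1) n ≫ f = 0),
    Rel _ n f (((projectiveResolution X).isoExt n Y).hom ξ) ∧
      (projectiveResolution X).extMk f (n+1) rfl hf = η

lemma T_left {X Y : ModuleCat.{u} R} {n : ℕ}
    (ξ : ((_root_.Ext R (ModuleCat.{u} R) n).obj (op X)).obj Y) :
    ∃ η : Abelian.Ext X Y n, T ξ η := by
  obtain ⟨f, hf, hr⟩ := rel_surj _ n (((projectiveResolution X).isoExt n Y).hom ξ)
  exact ⟨_, f, hf, hr, rfl⟩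

lemma T_right {X Y : ModuleCat.{u} R} {n : ℕ} (η : Abelian.Ext X Y n) :
    ∃ ξ : ((_root_.Ext R (ModuleCat.{u} R) n).obj (op X)).obj Y, T ξ η := by
  obtain ⟨f, hf, hr⟩ := (projectiveResolution X).extMk_surjective η (n+1) rfl
  obtain ⟨h, hh⟩ := rel_exists ((projectiveResolution X).complex.linearYonedaObj R Y) n f hf
  refine ⟨((projectiveResolution X).isoExt n Y).inv h, f, hf, ?_, hr⟩
  rwa [← ConcreteCategory.comp_apply, Iso.inv_hom_id]

lemma T_zero {X Y : ModuleCat.{u} R} {n : ℕ} (hn : 1 ≤ n)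
    {ξ : ((_root_.Ext R (ModuleCat.{u} R) n).obj (op X)).obj Y} {η : Abelian.Ext X Y n}
    (h : T ξ η) : ξ = 0 ↔ η = 0 := by
  obtain ⟨f, hf, hr, rfl⟩ := h
  obtain ⟨p, rfl⟩ : ∃ p, n = p + 1 := ⟨n - 1, by omega⟩
  rw [(projectiveResolution X).extMk_eq_zero_iff f _ rfl hf p rfl]
  have h0 := rel_zero ((projectiveResolution X).complex.linearYonedaObj R Y) (p+1) p rfl f _ hr
  refine Iff.trans ?_ h0
  have hinj : Function.Injective ((projectiveResolution X).isoExt (R := R) (p+1) Y).hom :=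
    (ModuleCat.mono_iff_injective _).1 inferInstance
  rw [map_eq_zero_iff _ hinj]

lemma T_nat {X X' Y : ModuleCat.{u} R} {n : ℕ} (g : X' ⟶ X)
    {ξ : ((_root_.Ext R (ModuleCat.{u} R) n).obj (op X)).obj Y} {η : Abelian.Ext X Y n}
    (h : T ξ η) : T (((_root_.Ext R (ModuleCat.{u} R) n).map g.op).app Y ξ)
      ((Abelian.Ext.mk₀ g).comp η (zero_add n)) := by
  obtain ⟨f, hf, hr, rfl⟩ := h
  let φ : ProjectiveResolution.Hom (projectiveResolution X') (projectiveResolution X) g :=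
    { hom := ProjectiveResolution.lift g _ _
      hom_f_zero_comp_π_f_zero := by
        have := congrArg (fun k => HomologicalComplex.Hom.f k 0)
          (ProjectiveResolution.lift_commutes g (projectiveResolution X') (projectiveResolution X))
        simp only [HomologicalComplex.comp_f] at this
        exact this }
  rw [(projectiveResolution X).mk₀_comp_extMk f _ rfl hf φ]
  refine ⟨_, _, ?_, rfl⟩
  rw [← ConcreteCategory.comp_apply, isoExt_nat _ _ g φ]
  exact rel_nat (yMap φ.hom Y) n f _ hr

/-- The surjection `R/J → R/K` for `J ≤ K`. -/
def qm {J K : Ideal R} (h : J ≤ K) : ModuleCat.of R (R ⧸ J) ⟶ ModuleCat.of R (R ⧸ K) :=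
  ModuleCat.ofHom (Submodule.mapQ J K LinearMap.id h)

/-- Every class of `Ext^i(R/J^n, M)` dies in `Ext^i(R/J^m, M)` for large `m`. -/
def Van (J : Ideal R) (i : ℕ) (M : ModuleCat.{u} R) : Prop :=
  ∀ (n : ℕ) (x : Abelian.Ext (ModuleCat.of R (R ⧸ J ^ n)) M i), ∃ (m : ℕ) (h : n ≤ m),
    (Abelian.Ext.mk₀ (qm (Ideal.pow_le_pow_right h : J ^ m ≤ J ^ n))).comp x (zero_add i) = 0

lemma van_iff (J : Ideal R) (i : ℕ) (hi : 1 ≤ i) (M : ModuleCat.{u} R) :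
    Van J i M ↔ ¬ Nontrivial ((localCohomology J i).obj M) := by
  rw [not_nontrivial_iff_subsingleton]
  let D := localCohomology.diagram (localCohomology.idealPowersDiagram J) i
  let F : ℕᵒᵖᵒᵖ ⥤ ModuleCat.{u} R := D ⋙ (evaluation _ _).obj M
  have hpf : PreservesFilteredColimitsOfSize.{0, 0} (forget (ModuleCat.{u} R)) :=
    preservesFilteredColimitsOfSize_shrink.{0, u, 0, u} _
  have hpc : PreservesColimit F (forget (ModuleCat.{u} R)) :=
    (hpf.preserves_filtered_colimits ℕᵒᵖᵒᵖ).preservesColimit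
  let e : (localCohomology J i).obj M ≅ colimit F := colimitObjIsoColimitCompEvaluation D M
  have he : Subsingleton ((localCohomology J i).obj M) ↔ Subsingleton ↥(colimit F) :=
    (e.toLinearEquiv.toEquiv).subsingleton_congr
  have h1 : Subsingleton ↥(colimit F) ↔
      ∀ (n : ℕ) (ξ : F.obj (op (op n))), ∃ (m : ℕ) (h : n ≤ m),
        F.map (homOfLE h).op.op ξ = 0 := by
    constructor
    · intro hs n ξ
      have h0 : colimit.ι F (op (op n)) ξ = colimit.ι F (op (op n)) 0 := Subsingleton.elim _ _
      obtain ⟨k, f, g, hfg⟩ := Concrete.colimit_exists_of_rep_eq F ξ 0 h0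
      refine ⟨k.unop.unop, leOfHom f.unop.unop, ?_⟩
      rw [map_zero] at hfg
      exact hfg
    · intro H
      refine subsingleton_of_forall_eq 0 fun y => ?_
      obtain ⟨k, ξ, rfl⟩ := Concrete.colimit_exists_rep F y
      obtain ⟨m, hm, h0⟩ := H k.unop.unop ξ
      rw [← colimit.w F (homOfLE hm).op.op, ConcreteCategory.comp_apply]
      erw [h0]
      exact map_zero _
  rw [he, h1]
  constructor
  · intro H n ξ
    obtain ⟨η, hη⟩ := T_left (X := ModuleCat.of R (R ⧸ J ^ n)) ξ
    obtain ⟨m, h, h0⟩ := H n η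
    exact ⟨m, h, (T_zero hi (T_nat (qm (Ideal.pow_le_pow_right h)) hη)).2 h0⟩
  · intro H n η
    obtain ⟨ξ, hξ⟩ := T_right η
    obtain ⟨m, h, h0⟩ := H n ξ
    exact ⟨m, h, (T_zero hi (T_nat (qm (Ideal.pow_le_pow_right h)) hξ)).1 h0⟩

end Bridge
end Lnk

namespace Lnk
section Shift
open Abelian
variable {R : Type u} [CommRing R]

lemma ses_exact {A B C : Type u} [AddCommGroup A] [Module R A] [AddCommGroup B] [Module R B]
    [AddCommGroup C] [Module R C] (f : A →ₗ[R] B) (g : B →ₗ[R] C)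
    (hf : Function.Injective f) (hg : Function.Surjective g) (hfg : Function.Exact f g)
    (w : ModuleCat.ofHom f ≫ ModuleCat.ofHom g = 0) :
    (ShortComplex.mk (ModuleCat.ofHom f) (ModuleCat.ofHom g) w).ShortExact := by
  have h1 : Mono (ModuleCat.ofHom f) := (ModuleCat.mono_iff_injective _).2 hf
  have h2 : Epi (ModuleCat.ofHom g) := (ModuleCat.epi_iff_surjective _).2 hg
  refine ShortComplex.ShortExact.mk' ?_ h1 h2
  rw [ShortComplex.ShortExact.moduleCat_exact_iff_function_exact]
  exact hfg

/-- Dimension shifting, functorially. -/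
lemma shift {A B C : Type u} [AddCommGroup A] [Module R A] [AddCommGroup B] [Module R B]
    [AddCommGroup C] [Module R C] (f : A →ₗ[R] B) (g : B →ₗ[R] C)
    (hf : Function.Injective f) (hg : Function.Surjective g) (hfg : Function.Exact f g)
    (Y : ModuleCat.{u} R) (i : ℕ) (ξ : Ext (ModuleCat.of R C) Y (i + 1))
    (hξ : (Ext.mk₀ (ModuleCat.ofHom g)).comp ξ (zero_add _) = 0) :
    ∃ η : Ext (ModuleCat.of R A) Y i,
      ∀ (A' B' C' : Type u) [AddCommGroup A'] [Module R A'] [AddCommGroup B'] [Module R B']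
        [AddCommGroup C'] [Module R C'] (f' : A' →ₗ[R] B') (g' : B' →ₗ[R] C')
        (_ : Function.Injective f') (_ : Function.Surjective g') (_ : Function.Exact f' g')
        (α : A' →ₗ[R] A) (β : B' →ₗ[R] B) (γ : C' →ₗ[R] C)
        (_ : f ∘ₗ α = β ∘ₗ f') (_ : g ∘ₗ β = γ ∘ₗ g'),
        (Ext.mk₀ (ModuleCat.ofHom α)).comp η (zero_add _) = 0 →
        (Ext.mk₀ (ModuleCat.ofHom γ)).comp ξ (zero_add _) = 0 := by
  have w : ModuleCat.ofHom f ≫ ModuleCat.ofHom g = 0 := by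
    ext x; exact hfg.apply_apply_eq_zero x
  have hS := ses_exact f g hf hg hfg w
  obtain ⟨η, hη⟩ := Ext.contravariant_sequence_exact₃ hS Y ξ hξ (Nat.add_comm 1 i)
  refine ⟨η, ?_⟩
  intro A' B' C' _ _ _ _ _ _ f' g' hf' hg' hfg' α β γ h1 h2 h0
  have w' : ModuleCat.ofHom f' ≫ ModuleCat.ofHom g' = 0 := by
    ext x; exact hfg'.apply_apply_eq_zero x
  have hS' := ses_exact f' g' hf' hg' hfg' w'
  let τ : ShortComplex.mk (ModuleCat.ofHom f') (ModuleCat.ofHom g') w' ⟶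
      ShortComplex.mk (ModuleCat.ofHom f) (ModuleCat.ofHom g) w :=
    { τ₁ := ModuleCat.ofHom α
      τ₂ := ModuleCat.ofHom β
      τ₃ := ModuleCat.ofHom γ
      comm₁₂ := by
        ext x; exact LinearMap.congr_fun h1 x
      comm₂₃ := by
        ext x; exact LinearMap.congr_fun h2 x }
  have hn := ShortComplex.ShortExact.extClass_naturality hS' hS τ
  rw [← hη]
  have e1 : (Ext.mk₀ (ModuleCat.ofHom γ)).comp (hS.extClass.comp η (Nat.add_comm 1 i)) (zero_add _)
      = ((Ext.mk₀ τ.τ₃).comp hS.extClass (zero_add 1)).comp η (Nat.add_comm 1 i) := by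
    rw [Ext.comp_assoc _ _ _ _ _ (by omega)]
  refine e1.trans ?_
  rw [← hn, Ext.comp_assoc _ _ _ _ (zero_add _) (by omega)]
  have e2 : (Ext.mk₀ τ.τ₁).comp η (zero_add _) = 0 := h0
  rw [e2, Ext.comp_zero]

/-- every class on `X` of positive degree dies on a projective cover -/
lemma proj_zero {B C : Type u} [AddCommGroup B] [Module R B] [Module.Projective R B]
    [AddCommGroup C] [Module R C] (g : B →ₗ[R] C) (Y : ModuleCat.{u} R) (i : ℕ)
    (ξ : Ext (ModuleCat.of R C) Y (i + 1)) :
    (Ext.mk₀ (ModuleCat.ofHom g)).comp ξ (zero_add _) = 0 := by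
  have : Projective (ModuleCat.of R B) := (IsProjective.iff_projective (R := R) B).1 inferInstance
  exact Ext.eq_zero_of_projective _

/-- Restriction along a composite. -/
lemma comp_of {A B C : Type u} [AddCommGroup A] [Module R A] [AddCommGroup B] [Module R B]
    [AddCommGroup C] [Module R C] (f : A →ₗ[R] B) (g : B →ₗ[R] C) {Y : ModuleCat.{u} R} {i : ℕ}
    (ξ : Ext (ModuleCat.of R C) Y i) :
    (Ext.mk₀ (ModuleCat.ofHom (g ∘ₗ f))).comp ξ (zero_add _) =
      (Ext.mk₀ (ModuleCat.ofHom f)).comp ((Ext.mk₀ (ModuleCat.ofHom g)).comp ξ (zero_add _))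
        (zero_add _) := by
  rw [ModuleCat.ofHom_comp, ← Ext.mk₀_comp_mk₀, Ext.comp_assoc]
  omega

lemma comp_of_zero {A B C : Type u} [AddCommGroup A] [Module R A] [AddCommGroup B] [Module R B]
    [AddCommGroup C] [Module R C] (f : A →ₗ[R] B) (g : B →ₗ[R] C) {Y : ModuleCat.{u} R} {i : ℕ}
    (ξ : Ext (ModuleCat.of R C) Y i)
    (h : (Ext.mk₀ (ModuleCat.ofHom g)).comp ξ (zero_add _) = 0) (k : A →ₗ[R] C)
    (hk : k = g ∘ₗ f) :
    (Ext.mk₀ (ModuleCat.ofHom k)).comp ξ (zero_add _) = 0 := by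
  rw [hk, comp_of, h, Ext.comp_zero]

end Shift
end Lnk

namespace Lnk
section Tors
open Abelian
variable {R : Type u} [CommRing R]

lemma tors [IsNoetherianRing R] (c : Ideal R) (k : ℕ) (N : ModuleCat.{u} R)
    (hN : ∀ r ∈ c ^ k, ∀ y : N, r • y = 0) (i : ℕ) :
    ∀ (X : Type u) [AddCommGroup X] [Module R X] [Module.Finite R X]
      (ξ : Ext (ModuleCat.of R X) N i), ∃ m : ℕ, ∀ (A : Type u) [AddCommGroup A] [Module R A]
      (φ : A →ₗ[R] X), LinearMap.range φ ≤ c ^ m • (⊤ : Submodule R X) →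
      (Ext.mk₀ (ModuleCat.ofHom φ)).comp ξ (zero_add _) = 0 := by
  induction i with
  | zero =>
    intro X _ _ _ ξ
    obtain ⟨f, rfl⟩ := (Ext.mk₀_bijective (ModuleCat.of R X) N).2 ξ
    refine ⟨k, fun A _ _ φ hφ => ?_⟩
    rw [Ext.mk₀_comp_mk₀]
    have : ModuleCat.ofHom φ ≫ f = 0 := by
      ext x
      have h1 : (c ^ k • (⊤ : Submodule R X)) ≤ LinearMap.ker f.hom := by
        rw [Submodule.smul_le]
        intro r hr y _
        rw [LinearMap.mem_ker, map_smul]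
        exact hN r hr _
      exact h1 (hφ ⟨x, rfl⟩)
    rw [this, Ext.mk₀_zero]
  | succ i ih =>
    intro X _ _ _ ξ
    obtain ⟨P, _, _, _, _, π, hπ⟩ : ∃ (P : Type u) (_ : AddCommGroup P) (_ : Module R P)
        (_ : Module.Finite R P) (_ : Module.Projective R P) (π : P →ₗ[R] X),
        Function.Surjective π := by
      obtain ⟨n, π, hπ⟩ := Module.Finite.exists_fin' R X
      exact ⟨Fin n → R, inferInstance, inferInstance, inferInstance, inferInstance, π, hπ⟩
    let K := LinearMap.ker π
    obtain ⟨η, hη⟩ := shift K.subtype π K.injective_subtype hπ (LinearMap.exact_subtype_ker_map π)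
      N i ξ (proj_zero π N i ξ)
    obtain ⟨m0, hm0⟩ := ih K η
    obtain ⟨k', hk'⟩ := Ideal.exists_pow_inf_eq_pow_smul c K
    refine ⟨k' + m0, fun A _ _ φ hφ => ?_⟩
    obtain ⟨P', hP'⟩ : ∃ P' : Submodule R (P), P' = c ^ (k' + m0) • ⊤ := ⟨_, rfl⟩
    obtain ⟨X', hX'⟩ : ∃ X' : Submodule R X, X' = c ^ (k' + m0) • ⊤ := ⟨_, rfl⟩
    rw [← hX'] at hφ
    have hmap : P'.map π = X' := by
      rw [hP', hX', Submodule.map_smul'', Submodule.map_top, LinearMap.range_eq_top.2 hπ]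
    have hle : ∀ x ∈ P', π x ∈ X' := fun x hx => hmap ▸ Submodule.mem_map_of_mem hx
    let g' : P' →ₗ[R] X' := π.restrict hle
    have hg' : Function.Surjective g' := by
      rintro ⟨x, hx⟩
      rw [← hmap] at hx
      obtain ⟨y, hy, rfl⟩ := hx
      exact ⟨⟨y, hy⟩, rfl⟩
    let K' := LinearMap.ker g'
    have hK' : ∀ x : K', ((x : P') : P) ∈ K := fun x => by
      have := x.2
      exact congrArg Subtype.val this
    let α : K' →ₗ[R] K := (P'.subtype ∘ₗ K'.subtype).codRestrict K hK'
    have hα : LinearMap.range α ≤ c ^ m0 • (⊤ : Submodule R K) := by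
      rintro _ ⟨x, rfl⟩
      have h1 : ((x : P') : P) ∈ c ^ (k' + m0) • ⊤ ⊓ K :=
        ⟨hP' ▸ x.1.2, hK' x⟩
      rw [hk' _ (Nat.le_add_right _ _), Nat.add_sub_cancel_left] at h1
      have h2 : ((x : P') : P) ∈ c ^ m0 • K :=
        Submodule.smul_mono le_rfl inf_le_right h1
      have h3 : (c ^ m0 • (⊤ : Submodule R K)).map K.subtype = c ^ m0 • K := by
        rw [Submodule.map_smul'', Submodule.map_top, Submodule.range_subtype]
      rw [← h3] at h2
      obtain ⟨y, hy, hyx⟩ := h2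
      have : α x = y := Subtype.ext hyx.symm
      rw [this]; exact hy
    have hc1 : K.subtype ∘ₗ α = P'.subtype ∘ₗ K'.subtype := LinearMap.ext fun _ => rfl
    have hc2 : π ∘ₗ P'.subtype = X'.subtype ∘ₗ g' := LinearMap.ext fun _ => rfl
    have h0 := hm0 K' α hα
    have hex : Function.Exact K'.subtype g' := LinearMap.exact_subtype_ker_map g'
    clear_value α K' g'
    have := hη K' P' X' K'.subtype g' K'.injective_subtype hg' hex
      α P'.subtype X'.subtype hc1 hc2 h0
    exact comp_of_zero (φ.codRestrict X' (fun x => hφ ⟨x, rfl⟩)) X'.subtype ξ this φ rfl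

lemma van_tors [IsNoetherianRing R] (c : Ideal R) (k : ℕ) (N : ModuleCat.{u} R)
    (hN : ∀ r ∈ c ^ k, ∀ y : N, r • y = 0) (i : ℕ) : Van c (i + 1) N := by
  intro n ξ
  obtain ⟨η, hη⟩ := shift (c ^ n).subtype (c ^ n).mkQ (Submodule.injective_subtype _)
    (Submodule.mkQ_surjective _) (LinearMap.exact_subtype_mkQ _) N i ξ (proj_zero _ N i ξ)
  obtain ⟨m, hm⟩ := tors c k N hN i _ η
  have hle : c ^ (m + n) ≤ c ^ n := Ideal.pow_le_pow_right (Nat.le_add_left _ _)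
  refine ⟨m + n, Nat.le_add_left _ _, ?_⟩
  refine hη _ _ _ (c ^ (m + n)).subtype (c ^ (m + n)).mkQ (Submodule.injective_subtype _)
    (Submodule.mkQ_surjective _) (LinearMap.exact_subtype_mkQ _) (Submodule.inclusion hle)
    LinearMap.id _ rfl rfl (hm _ _ ?_)
  rintro _ ⟨x, rfl⟩
  have h3 : (c ^ m • (⊤ : Submodule R ↥(c ^ n))).map (c ^ n).subtype = c ^ (m + n) := by
    rw [Submodule.map_smul'', Submodule.map_top, Submodule.range_subtype, pow_add]; rfl
  have h2 : (x : R) ∈ (c ^ m • (⊤ : Submodule R ↥(c ^ n))).map (c ^ n).subtype :=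
    h3.symm ▸ x.2
  obtain ⟨y, hy, hyx⟩ := h2
  have : Submodule.inclusion hle x = y := Subtype.ext hyx.symm
  rw [this]; exact hy

end Tors

section Reg
open Abelian Pointwise
variable {R : Type u} [CommRing R]

lemma ext_smul {X Y : ModuleCat.{u} R} {i : ℕ} (r : R) (ξ : Ext X Y i)
    (h : ∀ x : X, r • x = 0) : r • ξ = 0 := by
  have h1 : r • 𝟙 X = 0 := by
    ext x; exact h x
  have smul_eq : r • ξ = (Ext.mk₀ (r • 𝟙 X)).comp ξ (zero_add _) := by simp [Ext.mk₀_smul]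
  rw [smul_eq, h1, Ext.mk₀_zero, Ext.zero_comp]

lemma qm_comp {J K L : Ideal R} (h : J ≤ K) (h' : K ≤ L) {Y : ModuleCat.{u} R} {i : ℕ}
    (ξ : Ext (ModuleCat.of R (R ⧸ L)) Y i) :
    (Ext.mk₀ (qm h)).comp ((Ext.mk₀ (qm h')).comp ξ (zero_add _)) (zero_add _) =
      (Ext.mk₀ (qm (h.trans h'))).comp ξ (zero_add _) := by
  have : qm (h.trans h') = qm h ≫ qm h' := by
    ext; rfl
  rw [this, ← Ext.mk₀_comp_mk₀, Ext.comp_assoc]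
  omega

lemma conn (S : ShortComplex (ModuleCat.{u} R)) (hS : S.ShortExact) (X : ModuleCat.{u} R) (i : ℕ)
    (ξ : Ext X S.X₁ (i + 1)) (h : ξ.comp (Ext.mk₀ S.f) (add_zero _) = 0) :
    ∃ ζ : Ext X S.X₃ i, ∀ (X' : ModuleCat.{u} R) (v : X' ⟶ X),
      (Ext.mk₀ v).comp ζ (zero_add _) = 0 → (Ext.mk₀ v).comp ξ (zero_add _) = 0 := by
  obtain ⟨ζ, rfl⟩ := Ext.covariant_sequence_exact₁ _ hS ξ h rfl
  refine ⟨ζ, fun X' v hv => ?_⟩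
  rw [← Ext.comp_assoc _ _ _ (zero_add i) rfl (by omega), hv, Ext.zero_comp]

lemma van_reg (c : Ideal R) (M : ModuleCat.{u} R) (x : R) (hx : x ∈ c) (hr : IsSMulRegular M x)
    (i : ℕ) (h : Van c i (ModuleCat.of R (QuotSMulTop x M))) : Van c (i + 1) M := by
  have key : ∀ (p n : ℕ) (ξ : Ext (ModuleCat.of R (R ⧸ c ^ n)) M (i + 1)), x ^ p • ξ = 0 →
      ∃ (m : ℕ) (h : n ≤ m), (Ext.mk₀ (qm (Ideal.pow_le_pow_right h : c ^ m ≤ c ^ n))).comp ξ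
        (zero_add _) = 0 := by
    intro p
    induction p with
    | zero =>
      intro n ξ h0
      rw [pow_zero, one_smul] at h0
      exact ⟨n, le_rfl, by rw [h0, Ext.comp_zero]⟩
    | succ p ih =>
      intro n ξ h0
      have hS := hr.smulShortComplex_shortExact
      have h1 : (x ^ p • ξ).comp (Ext.mk₀ (x • 𝟙 M)) (add_zero _) = 0 := by
        rw [Ext.mk₀_smul, Ext.comp_smul, Ext.comp_mk₀_id, smul_smul, ← pow_succ']
        exact h0
      have hf : (M.smulShortComplex x).f = x • 𝟙 M := ModuleCat.smulShortComplex_f_eq_smul_id M x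
      obtain ⟨ζ, hζ⟩ := conn _ hS _ i (x ^ p • ξ)
        ((congrArg (fun t : M ⟶ M => (x ^ p • ξ).comp (Ext.mk₀ t) (add_zero _)) hf).trans h1)
      obtain ⟨m, hm, h2⟩ := h n ζ
      have h3 : x ^ p • ((Ext.mk₀ (qm (Ideal.pow_le_pow_right hm : c ^ m ≤ c ^ n))).comp ξ
        (zero_add _)) = 0 := by
        rw [← Ext.comp_smul]
        exact hζ _ _ h2
      obtain ⟨m', hm', h4⟩ := ih m _ h3
      exact ⟨m', hm.trans hm', by rw [qm_comp] at h4; exact h4⟩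
  intro n ξ
  refine key n n ξ (ext_smul _ _ ?_)
  intro y
  obtain ⟨y, rfl⟩ := Submodule.mkQ_surjective _ y
  rw [← map_smul]
  refine (Submodule.Quotient.mk_eq_zero _).2 ?_
  exact Ideal.mul_mem_right _ _ (Ideal.pow_mem_pow hx n)

lemma van_list [IsNoetherianRing R] (c : Ideal R) (k : ℕ) (rs : List R) :
    ∀ (M : Type u) [AddCommGroup M] [Module R M], IsWeaklyRegular M rs → (∀ r ∈ rs, r ∈ c) →
    c ^ k • (⊤ : Submodule R M) ≤ Ideal.ofList rs • ⊤ →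
    ∀ i, rs.length < i → Van c i (ModuleCat.of R M) := by
  induction rs with
  | nil =>
    intro M _ _ _ _ hk i hi
    obtain ⟨j, rfl⟩ : ∃ j, i = j + 1 := ⟨i - 1, by simp at hi; omega⟩
    refine van_tors c k _ ?_ j
    intro r hr y
    have : r • y ∈ Ideal.ofList ([] : List R) • (⊤ : Submodule R M) :=
      hk (Submodule.smul_mem_smul hr trivial)
    simpa using this
  | cons x rs ih =>
    intro M _ _ hreg hmem hk i hi
    rw [isWeaklyRegular_cons_iff] at hreg
    obtain ⟨j, rfl⟩ : ∃ j, i = j + 1 := ⟨i - 1, by simp at hi; omega⟩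
    refine van_reg c _ x (hmem x (by simp)) hreg.1 j ?_
    refine ih (QuotSMulTop x M) hreg.2 (fun r hr => hmem r (by simp [hr])) ?_ j
      (by simp at hi; omega)
    have := Submodule.map_mono (f := (x • (⊤ : Submodule R M)).mkQ) hk
    rw [Ideal.ofList_cons_smul, Submodule.map_sup, Submodule.map_smul'', Submodule.map_smul'',
      Submodule.map_top, Submodule.range_mkQ] at this
    refine this.trans (sup_le ?_ le_rfl)
    rw [Submodule.map_le_iff_le_comap]
    intro y hy
    rw [Submodule.mem_comap]
    have : (x • (⊤ : Submodule R M)).mkQ y = 0 := (Submodule.Quotient.mk_eq_zero _).2 hy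
    rw [this]; exact zero_mem _

end Reg
end Lnk

namespace Lnk
section MV
open Abelian
variable {R : Type u} [CommRing R]

/-- The quotient map between cyclic modules. -/
def lq {J K : Ideal R} (h : J ≤ K) : (R ⧸ J) →ₗ[R] (R ⧸ K) := Submodule.mapQ J K LinearMap.id h

lemma pull_zero {J K L : Ideal R} (h : J ≤ K) (h' : K ≤ L) {Y : ModuleCat.{u} R} {i : ℕ}
    (ξ : Ext (ModuleCat.of R (R ⧸ L)) Y i)
    (h0 : (Ext.mk₀ (qm h')).comp ξ (zero_add _) = 0) :
    (Ext.mk₀ (qm (h.trans h'))).comp ξ (zero_add _) = 0 := by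
  rw [← qm_comp h h', h0, Ext.comp_zero]

lemma mv_inj (A B : Ideal R) : Function.Injective
    ((lq (inf_le_left : A ⊓ B ≤ A)).prod (lq (inf_le_right : A ⊓ B ≤ B))) := by
  rw [← LinearMap.ker_eq_bot, LinearMap.ker_eq_bot']
  intro x hx
  obtain ⟨r, rfl⟩ := Submodule.mkQ_surjective _ x
  have h1 := congrArg Prod.fst hx
  have h2 := congrArg Prod.snd hx
  exact (Submodule.Quotient.mk_eq_zero _).2
    ⟨(Submodule.Quotient.mk_eq_zero A).1 h1, (Submodule.Quotient.mk_eq_zero B).1 h2⟩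

/-- The second map of the Mayer-Vietoris sequence. -/
def mvg (A B : Ideal R) : ((R ⧸ A) × (R ⧸ B)) →ₗ[R] (R ⧸ (A ⊔ B)) :=
  (lq (le_sup_left : A ≤ A ⊔ B)) ∘ₗ LinearMap.fst R _ _ +
    (lq (le_sup_right : B ≤ A ⊔ B)) ∘ₗ (-LinearMap.snd R _ _)

lemma mvg_mk (A B : Ideal R) (r s : R) :
    mvg A B (Submodule.Quotient.mk r, Submodule.Quotient.mk s) =
      Submodule.Quotient.mk (r - s) := by
  rw [sub_eq_add_neg]; rfl

lemma mv_surj (A B : Ideal R) : Function.Surjective (mvg A B) := by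
  intro x
  obtain ⟨r, rfl⟩ := Submodule.mkQ_surjective _ x
  exact ⟨(Submodule.Quotient.mk r, Submodule.Quotient.mk 0), by rw [mvg_mk, sub_zero]; rfl⟩

lemma mv_exact (A B : Ideal R) : Function.Exact
    ((lq (inf_le_left : A ⊓ B ≤ A)).prod (lq (inf_le_right : A ⊓ B ≤ B))) (mvg A B) := by
  rintro ⟨x, y⟩
  obtain ⟨r, rfl⟩ := Submodule.Quotient.mk_surjective _ x
  obtain ⟨s, rfl⟩ := Submodule.Quotient.mk_surjective _ y
  rw [mvg_mk, Submodule.Quotient.mk_eq_zero]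
  constructor
  · intro h
    obtain ⟨p, hp, q, hq, hpq⟩ := Submodule.mem_sup.1 h
    refine ⟨Submodule.Quotient.mk (r - p), ?_⟩
    refine Prod.ext ?_ ?_
    · refine (Submodule.Quotient.eq A).2 ?_
      have : r - p - r = -p := by ring
      change r - p - r ∈ A
      rw [this]; exact neg_mem hp
    · refine (Submodule.Quotient.eq B).2 ?_
      have : r - p - s = q := by linear_combination -hpq
      change r - p - s ∈ B
      rw [this]; exact hq
  · rintro ⟨z, hz⟩
    obtain ⟨t, rfl⟩ := Submodule.Quotient.mk_surjective _ z
    have h1 : t - r ∈ A := (Submodule.Quotient.eq A).1 (congrArg Prod.fst hz)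
    have h2 : t - s ∈ B := (Submodule.Quotient.eq B).1 (congrArg Prod.snd hz)
    have : r - s = -(t - r) + (t - s) := by ring
    rw [this]
    exact Submodule.add_mem_sup (neg_mem h1) h2

lemma mv_zero (A B : Ideal R) {Y : ModuleCat.{u} R} {i : ℕ}
    (ξ : Ext (ModuleCat.of R (R ⧸ (A ⊔ B))) Y i)
    (hA : (Ext.mk₀ (qm (le_sup_left : A ≤ A ⊔ B))).comp ξ (zero_add _) = 0)
    (hB : (Ext.mk₀ (qm (le_sup_right : B ≤ A ⊔ B))).comp ξ (zero_add _) = 0) :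
    (Ext.mk₀ (ModuleCat.ofHom (mvg A B))).comp ξ (zero_add _) = 0 := by
  have : ModuleCat.ofHom (mvg A B) =
    ModuleCat.ofHom ((lq (le_sup_left : A ≤ A ⊔ B)) ∘ₗ LinearMap.fst R (R ⧸ A) (R ⧸ B)) +
    ModuleCat.ofHom ((lq (le_sup_right : B ≤ A ⊔ B)) ∘ₗ (-LinearMap.snd R (R ⧸ A) (R ⧸ B))) := rfl
  have e1 := comp_of_zero (LinearMap.fst R (R ⧸ A) (R ⧸ B)) (lq (le_sup_left : A ≤ A ⊔ B)) ξ hA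
    ((lq (le_sup_left : A ≤ A ⊔ B)) ∘ₗ LinearMap.fst R (R ⧸ A) (R ⧸ B)) rfl
  have e2 := comp_of_zero (-LinearMap.snd R (R ⧸ A) (R ⧸ B)) (lq (le_sup_right : B ≤ A ⊔ B)) ξ hB
    ((lq (le_sup_right : B ≤ A ⊔ B)) ∘ₗ (-LinearMap.snd R (R ⧸ A) (R ⧸ B))) rfl
  rw [this, Ext.mk₀_add, Ext.add_comp, e1, e2, add_zero]

lemma artin [IsNoetherianRing R] (a b : Ideal R) (p : ℕ) :
    ∃ k, ∀ q, k + p ≤ q → a ^ q ⊓ b ^ q ≤ (a ⊓ b) ^ p := by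
  obtain ⟨k, hk⟩ := Ideal.exists_pow_inf_eq_pow_smul a (b ^ p : Submodule R R)
  refine ⟨k, fun q hq => ?_⟩
  have h1 : a ^ q ⊓ b ^ q ≤ a ^ (k + p) ⊓ b ^ p :=
    inf_le_inf (Ideal.pow_le_pow_right hq) (Ideal.pow_le_pow_right (by omega))
  have h2 := hk (k + p) (Nat.le_add_right _ _)
  rw [Nat.add_sub_cancel_left] at h2
  have h3 : a ^ (k + p) ⊓ b ^ p ≤ a ^ p * b ^ p := by
    have h4 : (a ^ (k + p) • (⊤ : Submodule R R)) = a ^ (k + p) := Ideal.mul_top _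
    rw [h4] at h2
    rw [h2]
    exact Submodule.smul_mono le_rfl inf_le_right
  refine h1.trans (h3.trans ?_)
  rw [← mul_pow]
  exact Ideal.pow_right_mono Ideal.mul_le_inf p

lemma mv [IsNoetherianRing R] (a b : Ideal R) (M : ModuleCat.{u} R) (j : ℕ)
    (ha : Van a (j + 1) M) (hb : Van b (j + 1) M) (hc : Van (a ⊓ b) j M) :
    Van (a ⊔ b) (j + 1) M := by
  intro n ξ
  have la : a ^ n ≤ (a ⊔ b) ^ n := Ideal.pow_right_mono le_sup_left n
  have lb : b ^ n ≤ (a ⊔ b) ^ n := Ideal.pow_right_mono le_sup_right n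
  obtain ⟨m1, hm1, h1⟩ := ha n ((Ext.mk₀ (qm la)).comp ξ (zero_add _))
  obtain ⟨m2, hm2, h2⟩ := hb n ((Ext.mk₀ (qm lb)).comp ξ (zero_add _))
  rw [qm_comp] at h1 h2
  obtain ⟨m, hma, hmb⟩ : ∃ m, m1 ≤ m ∧ m2 ≤ m := ⟨max m1 m2, le_max_left _ _, le_max_right _ _⟩
  have lm : a ^ m ⊔ b ^ m ≤ (a ⊔ b) ^ n :=
    sup_le ((Ideal.pow_le_pow_right (hm1.trans hma)).trans la)
      ((Ideal.pow_le_pow_right (hm2.trans hmb)).trans lb)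
  have z1 := pull_zero (Ideal.pow_le_pow_right hma) _ ξ h1
  have z2 := pull_zero (Ideal.pow_le_pow_right hmb) _ ξ h2
  have h3 := mv_zero (a ^ m) (b ^ m) ((Ext.mk₀ (qm lm)).comp ξ (zero_add _))
    (by rw [qm_comp]; exact z1) (by rw [qm_comp]; exact z2)
  obtain ⟨η, hη⟩ := shift _ _ (mv_inj (a ^ m) (b ^ m)) (mv_surj _ _) (mv_exact _ _) M j _ h3
  have lc : (a ⊓ b) ^ m ≤ a ^ m ⊓ b ^ m :=
    le_inf (Ideal.pow_right_mono inf_le_left m) (Ideal.pow_right_mono inf_le_right m)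
  obtain ⟨p, hp, h4⟩ := hc m ((Ext.mk₀ (qm lc)).comp η (zero_add _))
  rw [qm_comp] at h4
  obtain ⟨k, hk⟩ := artin a b p
  have hq := hk (m + (k + p)) (Nat.le_add_left _ _)
  obtain ⟨q, hmq, hqq⟩ : ∃ q, m ≤ q ∧ a ^ q ⊓ b ^ q ≤ (a ⊓ b) ^ p := ⟨_, Nat.le_add_right _ _, hq⟩
  have lqa : a ^ q ≤ a ^ m := Ideal.pow_le_pow_right hmq
  have lqb : b ^ q ≤ b ^ m := Ideal.pow_le_pow_right hmq
  have z3 := pull_zero hqq _ η h4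
  have h5 := hη _ _ _ _ _ (mv_inj (a ^ q) (b ^ q)) (mv_surj _ _) (mv_exact _ _)
    (lq (inf_le_inf lqa lqb)) ((lq lqa).prodMap (lq lqb)) (lq (sup_le_sup lqa lqb))
    (by
      ext
      · rfl
      · rfl)
    (by
      refine LinearMap.ext ?_
      rintro ⟨x, y⟩
      obtain ⟨r, rfl⟩ := Submodule.Quotient.mk_surjective _ x
      obtain ⟨s, rfl⟩ := Submodule.Quotient.mk_surjective _ y
      rfl) z3
  have h6 : (Ext.mk₀ (qm (sup_le_sup lqa lqb))).comp ((Ext.mk₀ (qm lm)).comp ξ (zero_add _))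
    (zero_add _) = 0 := h5
  rw [qm_comp] at h6
  have hnq : n ≤ q + q := by omega
  refine ⟨q + q, hnq, ?_⟩
  exact pull_zero (Ideal.sup_pow_add_le_pow_sup_pow) _ ξ h6

end MV

section Final
variable {R : Type u} [CommRing R]

lemma sq_le {M : Type u} [AddCommGroup M] [Module R M] (I a b : Ideal R)
    (h : Submodule.modColon (I • (⊤ : Submodule R M)) a = b • (⊤ : Submodule R M)) :
    (a ⊓ b) ^ 2 • (⊤ : Submodule R M) ≤ I • ⊤ := by
  rw [pow_two, mul_smul, Submodule.smul_le]
  intro r hr y hy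
  have h1 : y ∈ b • (⊤ : Submodule R M) := Submodule.smul_mono inf_le_right le_rfl hy
  rw [← h, Submodule.modColon] at h1
  simp only [Submodule.mem_iInf] at h1
  exact h1 r hr.1

lemma van_of_cohDim (a : Ideal R) (M : Type u) [AddCommGroup M] [Module R M] (i : ℕ) (hi : 1 ≤ i)
    (h : cohDim a M < i) : Van a i (ModuleCat.of R M) := by
  rw [van_iff a i hi]
  intro hn
  exact absurd (le_sSup ⟨i, rfl, hn⟩ : (i : ℕ∞) ≤ cohDim a M) (not_le.2 h)

end Final
end Lnk

variable {R : Type u} [CommRing R] [IsNoetherianRing R]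
variable {M : Type u} [AddCommGroup M] [Module R M] [Module.Finite R M] [Nontrivial M]

theorem stmt3 (a b : Ideal R) (rs : List R)
    (hreg : RingTheory.Sequence.IsRegular M rs)
    (ht : rs.length = gradeM (Ideal.ofList rs) M)
    (h : Ideal.IsLinkedBy M (Ideal.ofList rs) a b) :
    cohDim (a + b) M ≤
      max (max (cohDim a M) (cohDim b M)) ((rs.length : ℕ∞) + 1) := by
  refine sSup_le ?_
  rintro _ ⟨i, rfl, hi⟩
  by_contra hlt
  rw [not_le, max_lt_iff, max_lt_iff] at hlt
  obtain ⟨⟨h1, h2⟩, h3⟩ := hlt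
  have h3' : rs.length + 1 < i := by exact_mod_cast h3
  obtain ⟨j, rfl⟩ : ∃ j, i = j + 1 := ⟨i - 1, by omega⟩
  obtain ⟨-, hI, -, -, hab, -⟩ := h
  have hc : Lnk.Van (a ⊓ b) j (ModuleCat.of R M) :=
    Lnk.van_list (a ⊓ b) 2 rs M hreg.toIsWeaklyRegular
      (fun r hr => hI (Ideal.subset_span hr)) (Lnk.sq_le _ a b hab) j (by omega)
  have := Lnk.mv a b (ModuleCat.of R M) j (Lnk.van_of_cohDim a M _ (by omega) h1)
    (Lnk.van_of_cohDim b M _ (by omega) h2) hc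
  rw [Lnk.van_iff _ _ (by omega)] at this
  exact this hi
end
end

section
/- Let a and b be ideals linked by I over M with I generated by an M-regular sequence of length t, and suppose cd(a + b, M) ≥ t + 1. Then cd(a + b, M) = max{cd(a, M), cd(b, M), t + 1}. -/
universe u

open RingTheory.Sequence CategoryTheory

noncomputable section

namespace LC
open CategoryTheory Limits Opposite
section alg
variable {R : Type u} [CommRing R]

/-- `e` is `J`-torsion -/
def T {E : Type u} [AddCommGroup E] [Module R E] (J : Ideal R) (e : E) : Prop :=
  J ≤ (Ideal.torsionOf R E e).radical

section
variable {E F : Type u} [AddCommGroup E] [Module R E] [AddCommGroup F] [Module R F]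

lemma T.mono {J K : Ideal R} (h : J ≤ K) {e : E} (he : T K e) : T J e := h.trans he

lemma T.of_le_radical {J K : Ideal R} (h : J ≤ K.radical) {e : E} (he : T K e) : T J e :=
  h.trans ((Ideal.radical_mono he).trans (Ideal.radical_idem _).le)

lemma T_sup {J K : Ideal R} {e : E} : T (J ⊔ K) e ↔ T J e ∧ T K e := sup_le_iff

lemma T.map {J : Ideal R} {e : E} (he : T J e) (f : E →ₗ[R] F) : T J (f e) := by
  refine he.trans (Ideal.radical_mono fun r hr => ?_)
  rw [Ideal.mem_torsionOf_iff] at *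
  rw [← map_smul, hr, map_zero]

lemma T.add {J : Ideal R} {e f : E} (he : T J e) (hf : T J f) : T J (e + f) := by
  refine (le_inf he hf).trans ?_
  rw [← Ideal.radical_inf]
  refine Ideal.radical_mono fun r hr => ?_
  have h1 := hr.1
  have h2 := hr.2
  rw [SetLike.mem_coe, Ideal.mem_torsionOf_iff] at h1 h2
  rw [Ideal.mem_torsionOf_iff, smul_add, h1, h2, add_zero]

lemma T.smul {J : Ideal R} {e : E} (he : T J e) (x : R) : T J (x • e) :=
  he.map (LinearMap.lsmul R E x)

lemma T.neg {J : Ideal R} {e : E} (he : T J e) : T J (-e) := by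
  simpa using he.smul (-1)

lemma T.sub {J : Ideal R} {e f : E} (he : T J e) (hf : T J f) : T J (e - f) := by
  rw [sub_eq_add_neg]; exact he.add hf.neg

lemma T_bot (e : E) : T (⊥ : Ideal R) e := bot_le

lemma T_zero (J : Ideal R) : T J (0 : E) := by
  have : Ideal.torsionOf R E 0 = ⊤ := by simp
  rw [T, this, Ideal.radical_top]
  exact le_top

lemma T_span {x : R} {e : E} : T (Ideal.span {x}) e ↔ ∃ n : ℕ, x ^ n • e = 0 := by
  rw [T, Ideal.span_singleton_le_iff_mem, Ideal.mem_radical_iff]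
  simp [Ideal.mem_torsionOf_iff]

lemma T_of_pow {J : Ideal R} {e : E} (n : ℕ) (h : ∀ r ∈ J ^ n, r • e = 0) : T J e := by
  intro x hx
  exact ⟨n, (Ideal.mem_torsionOf_iff _ _).2 (h _ (Ideal.pow_mem_pow hx n))⟩

lemma T.pow [IsNoetherianRing R] {J : Ideal R} {e : E} (h : T J e) :
    ∃ n : ℕ, ∀ r ∈ J ^ n, r • e = 0 := by
  obtain ⟨k, hk⟩ := Ideal.exists_pow_le_of_le_radical_of_fg h (IsNoetherian.noetherian J)
  exact ⟨k, fun r hr => (Ideal.mem_torsionOf_iff _ _).1 (hk hr)⟩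

lemma T_smul_iff {x : R} {n : ℕ} {e : E} (h : T (Ideal.span {x}) (x ^ n • e)) :
    T (Ideal.span {x}) e := by
  obtain ⟨m, hm⟩ := T_span.1 h
  exact T_span.2 ⟨m + n, by rw [pow_add, mul_smul, hm]⟩

lemma extend {A B : Type u} [AddCommGroup A] [Module R A] [AddCommGroup B] [Module R B]
    (hE : Module.Injective R E) (p : A →ₗ[R] B) (φ : A →ₗ[R] E)
    (h : LinearMap.ker p ≤ LinearMap.ker φ) : ∃ ψ : B →ₗ[R] E, ∀ a, ψ (p a) = φ a := by
  obtain ⟨ψ, hψ⟩ := hE.out ((LinearMap.ker p).liftQ p le_rfl)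
    (LinearMap.ker_eq_bot.1 (Submodule.ker_liftQ_eq_bot _ _ _ le_rfl))
    ((LinearMap.ker p).liftQ φ h)
  exact ⟨ψ, fun a => hψ (Submodule.Quotient.mk a)⟩

lemma divide [IsNoetherianRing R] (hE : Module.Injective R E) (x : R) (n : ℕ) (J : Ideal R) (g : E)
    (hg : T J g) : ∃ h τ : E, T J h ∧ T J τ ∧ T (Ideal.span {x}) τ ∧ g = x ^ n • h + τ := by
  obtain ⟨k, hk⟩ := hg.pow
  let A := R ⧸ (J ^ k)
  let f : A →ₗ[R] E := Submodule.liftQ (J ^ k) (LinearMap.toSpanSingleton R E g)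
    (fun r hr => by simpa using hk r hr)
  let μ : A →ₗ[R] A := LinearMap.lsmul R A x
  obtain ⟨m, hm⟩ := monotone_stabilizes_iff_noetherian.2
    (inferInstance : IsNoetherian R A) (LinearMap.iterateKer μ)
  have hμ : ∀ (j : ℕ) (a : A), (μ ^ j) a = x ^ j • a := by
    intro j a
    induction j with
    | zero => simp
    | succ j ih => rw [pow_succ', Module.End.mul_apply, ih, pow_succ', mul_smul]; rfl
  have hker : LinearMap.ker (μ ^ (m + n)) ≤ LinearMap.ker ((x ^ m) • f) := by
    have := hm (m + n) (by omega)
    change LinearMap.ker (μ ^ m) = LinearMap.ker (μ ^ (m + n)) at this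
    rw [← this]
    intro a ha
    rw [LinearMap.mem_ker, hμ] at ha
    rw [LinearMap.mem_ker, LinearMap.smul_apply, ← map_smul, ha, map_zero]
  obtain ⟨ψ, hψ⟩ := extend hE (μ ^ (m + n)) _ hker
  let one : A := Submodule.Quotient.mk 1
  have hf1 : f one = g := by
    change (LinearMap.toSpanSingleton R E g) 1 = g
    simp
  have h1 : x ^ (m + n) • ψ one = x ^ m • g := by
    have := hψ one
    rw [hμ, map_smul, LinearMap.smul_apply, hf1] at this
    exact this
  have hJ : T J (ψ one) := by
    refine T_of_pow k fun r hr => ?_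
    rw [← map_smul]
    have : r • one = 0 := by
      rw [← Submodule.Quotient.mk_smul]
      exact (Submodule.Quotient.mk_eq_zero _).2 (by simpa using hr)
    rw [this, map_zero]
  refine ⟨ψ one, g - x ^ n • ψ one, hJ, hg.sub (hJ.smul _), ?_, by simp⟩
  refine T_span.2 ⟨m, ?_⟩
  rw [smul_sub, smul_smul, ← pow_add, h1, sub_self]

lemma artinRees [IsNoetherianRing R] (a b : Ideal R) (n : ℕ) :
    ∃ m : ℕ, a ^ m ⊓ b ^ m ≤ (a ⊓ b) ^ n := by
  obtain ⟨k, hk⟩ := Ideal.exists_pow_inf_eq_pow_smul a (M := R) (b ^ n)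
  refine ⟨n + k, ?_⟩
  have h := hk (n + k) (by omega)
  calc a ^ (n + k) ⊓ b ^ (n + k) ≤ a ^ (n + k) • (⊤ : Ideal R) ⊓ b ^ n := by
        refine inf_le_inf (by simp) (Ideal.pow_le_pow_right (by omega))
    _ ≤ a ^ n • b ^ n := by
        rw [h, show n + k - k = n by omega]
        exact Submodule.smul_mono le_rfl inf_le_right
    _ = (a * b) ^ n := by rw [mul_pow, smul_eq_mul]
    _ ≤ _ := Ideal.pow_right_mono Ideal.mul_le_inf n

lemma split [IsNoetherianRing R] (hE : Module.Injective R E) (a b : Ideal R) (e : E)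
    (he : T (a ⊓ b) e) : ∃ y z : E, T a y ∧ T b z ∧ e = y + z := by
  obtain ⟨k, hk⟩ := he.pow
  obtain ⟨m, hm⟩ := artinRees a b k
  obtain ⟨ψ, hψ⟩ := extend hE ((a ^ m).mkQ.prod (b ^ m).mkQ) (LinearMap.toSpanSingleton R E e) (by
    intro r hr
    rw [LinearMap.ker_prod, Submodule.ker_mkQ, Submodule.ker_mkQ] at hr
    simpa using hk r (hm hr))
  have h1 := hψ 1
  refine ⟨ψ ((a ^ m).mkQ 1, 0), ψ (0, (b ^ m).mkQ 1), ?_, ?_, ?_⟩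
  · refine T_of_pow m fun r hr => ?_
    have : r • (((a ^ m).mkQ 1, 0) : (R ⧸ a ^ m) × (R ⧸ b ^ m)) = 0 := by
      rw [Prod.smul_mk, ← map_smul, smul_zero, smul_eq_mul, mul_one]
      exact Prod.ext ((Submodule.Quotient.mk_eq_zero _).2 hr) rfl
    rw [← map_smul, this, map_zero]
  · refine T_of_pow m fun r hr => ?_
    have : r • ((0, (b ^ m).mkQ 1) : (R ⧸ a ^ m) × (R ⧸ b ^ m)) = 0 := by
      rw [Prod.smul_mk, ← map_smul, smul_zero, smul_eq_mul, mul_one]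
      exact Prod.ext rfl ((Submodule.Quotient.mk_eq_zero _).2 hr)
    rw [← map_smul, this, map_zero]
  · rw [← map_add]
    simpa using h1.symm
end

section cpx
variable [IsNoetherianRing R]
  {E : ℕ → Type u} [∀ n, AddCommGroup (E n)] [∀ n, Module R (E n)]
  (d : ∀ n, E n →ₗ[R] E (n + 1))

/-- vanishing of `H^{i+1}(Γ_J(E))` -/
def V (J : Ideal R) (i : ℕ) : Prop :=
  ∀ e : E (i + 1), T J e → d (i + 1) e = 0 → ∃ f : E i, T J f ∧ d i f = e

omit [IsNoetherianRing R] in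
lemma V_congr {J K : Ideal R} (h1 : J ≤ K.radical) (h2 : K ≤ J.radical) (i : ℕ) :
    V d J i → V d K i := by
  intro h e he hd
  obtain ⟨f, hf, hfe⟩ := h e (he.of_le_radical h1) hd
  exact ⟨f, hf.of_le_radical h2, hfe⟩

variable (hE : ∀ n, Module.Injective R (E n)) (hdd : ∀ n e, d (n + 1) (d n e) = 0)
  (hex : ∀ n e, d (n + 1) e = 0 → ∃ f, d n f = e)

include hE hdd in
lemma C_succ (J : Ideal R) (x : R) (i : ℕ)
    (H : ∀ f : E (i + 1), T J f → d (i + 1) f = 0 → ∃ n : ℕ, ∃ g : E i, T J g ∧ d i g = x ^ n • f)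
    (f : E (i + 1)) (hf : T J f) (hx : T (Ideal.span {x}) (d (i + 1) f)) :
    ∃ c : E (i + 1), T J c ∧ d (i + 1) c = 0 ∧ T (Ideal.span {x}) (f - c) := by
  obtain ⟨n, hn⟩ := T_span.1 hx
  obtain ⟨m, g, hg, hgf⟩ := H (x ^ n • f) (hf.smul _) (by rw [map_smul, hn])
  obtain ⟨h, τ, hh, hτ, hτx, rfl⟩ := divide (hE i) x (m + n) J g hg
  refine ⟨d i h, hh.map _, hdd _ _, ?_⟩
  apply T_smul_iff (n := m + n)
  have : x ^ (m + n) • (f - d i h) = d i τ := by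
    rw [smul_sub, pow_add, mul_smul, ← hgf, map_add, map_smul, pow_add]
    abel
  rw [this]
  exact hτx.map _

omit [IsNoetherianRing R] in
lemma V_add (J : Ideal R) (x : R) (i : ℕ) (hV : V d J i)
    (C : ∀ f : E i, T J f → T (Ideal.span {x}) (d i f) →
      ∃ c : E i, T J c ∧ d i c = 0 ∧ T (Ideal.span {x}) (f - c)) :
    V d (J ⊔ Ideal.span {x}) i := by
  intro e he hde
  obtain ⟨heJ, hex⟩ := T_sup.1 he
  obtain ⟨f, hf, rfl⟩ := hV e heJ hde
  obtain ⟨c, hc, hdc, hfc⟩ := C f hf hex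
  exact ⟨f - c, T_sup.2 ⟨hf.sub hc, hfc⟩, by rw [map_sub, hdc, sub_zero]⟩

include hE hdd hex in
lemma V_list (rs : List R) : ∀ i, rs.length ≤ i → V d (Ideal.ofList rs) i := by
  induction rs with
  | nil =>
    intro i _ e _ hde
    obtain ⟨f, hf⟩ := hex i e hde
    exact ⟨f, by rw [Ideal.ofList_nil]; exact T_bot f, hf⟩
  | cons x rs ih =>
    intro i hi
    obtain ⟨i, rfl⟩ : ∃ j, i = j + 1 := ⟨i - 1, by simp at hi; omega⟩
    simp at hi
    rw [Ideal.ofList_cons, sup_comm]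
    refine V_add d _ x _ (ih _ (by omega)) (C_succ d hE hdd _ x i fun f hf hdf => ?_)
    obtain ⟨g, hg, hgf⟩ := ih i hi f hf hdf
    exact ⟨0, g, hg, by simpa using hgf⟩

variable (x : R) (hx : ∀ e : E 0, d 0 e = 0 → x • e = 0)

include hE hdd hex hx in
omit [IsNoetherianRing R] in
lemma homotopy (i : ℕ) : ∃ (h : E (i + 1) →ₗ[R] E i) (h' : E (i + 2) →ₗ[R] E (i + 1)),
    ∀ e, x • e = d i (h e) + h' (d (i + 1) e) := by
  have step : ∀ (i : ℕ) (h : E (i + 1) →ₗ[R] E i), (∀ e, d i (h (d i e)) = x • d i e) →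
      ∃ (h' : E (i + 2) →ₗ[R] E (i + 1)), ∀ e, x • e = d i (h e) + h' (d (i + 1) e) := by
    intro i h hh
    obtain ⟨h', hh'⟩ := extend (hE (i + 1)) (d (i + 1))
      (LinearMap.lsmul R _ x - d i ∘ₗ h) (by
        intro e he
        obtain ⟨f, rfl⟩ := hex i e he
        simp [hh])
    exact ⟨h', fun e => by rw [hh']; simp⟩
  induction i with
  | zero =>
    obtain ⟨h, hh⟩ := extend (hE 0) (d 0) (LinearMap.lsmul R _ x) (by
      intro e he; simpa using hx e he)
    obtain ⟨h', hh'⟩ := step 0 h (fun e => by rw [hh]; simp)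
    exact ⟨h, h', hh'⟩
  | succ i ih =>
    obtain ⟨h, h', hh⟩ := ih
    obtain ⟨h'', hh''⟩ := step (i + 1) h' (fun e => by
      have := hh e
      rw [← map_smul, this, map_add, hdd, zero_add])
    exact ⟨h', h'', hh''⟩

include hE hdd hex hx in
lemma V_ann (J : Ideal R) (i : ℕ) : V d J i ↔ V d (J ⊔ Ideal.span {x}) i := by
  constructor
  · intro hV
    cases i with
    | zero =>
      refine V_add d J x 0 hV fun f hf hfx => ⟨0, T_zero _, map_zero _, ?_⟩
      obtain ⟨n, hn⟩ := T_span.1 hfx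
      rw [sub_zero]
      refine T_span.2 ⟨n + 1, ?_⟩
      rw [pow_succ', mul_smul]
      exact hx _ (by rw [map_smul, hn])
    | succ i =>
      refine V_add d J x _ hV (C_succ d hE hdd J x i fun f hf hdf => ?_)
      obtain ⟨h, h', hh⟩ := homotopy d hE hdd hex x hx i
      refine ⟨1, h f, hf.map _, ?_⟩
      rw [pow_one, hh, hdf, map_zero, add_zero]
  · intro hV e he hde
    obtain ⟨h, h', hh⟩ := homotopy d hE hdd hex x hx i
    obtain ⟨k, τ, hk, hτ, hτx, hk'⟩ := divide (hE i) x 1 J (h e) (he.map _)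
    have h1 : T (Ideal.span {x}) (e - d i k) := by
      apply T_smul_iff (n := 1)
      have : x ^ 1 • (e - d i k) = d i τ := by
        rw [smul_sub, pow_one, hh, hk', hde, map_zero, add_zero, map_add, map_smul, pow_one]
        abel
      rw [this]
      exact hτx.map _
    obtain ⟨w, hw, hwe⟩ := hV (e - d i k) (T_sup.2 ⟨he.sub (hk.map _), h1⟩)
      (by rw [map_sub, hde, hdd, sub_zero])
    exact ⟨k + w, hk.add (T_sup.1 hw).1, by rw [map_add, hwe]; abel⟩

include hE hdd hex in
lemma V_ann_ideal (N : Ideal R) (hN : ∀ x ∈ N, ∀ e : E 0, d 0 e = 0 → x • e = 0)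
    (J : Ideal R) (i : ℕ) : V d J i ↔ V d (J ⊔ N) i := by
  have := Submodule.fg_induction (R := R) (M := R)
    (motive := fun K _ => K ≤ N → ∀ J : Ideal R, V d J i ↔ V d (J ⊔ K) i)
    (fun x hxN J => V_ann d hE hdd hex x
      (hN x (hxN (Submodule.mem_span_singleton_self x))) J i)
    (fun K L _ _ hK hL hKL J => by
      rw [← sup_assoc, ← hL (le_sup_right.trans hKL), ← hK (le_sup_left.trans hKL)])
    N (IsNoetherian.noetherian N)
  exact this le_rfl J

include hE hdd in
lemma MV (a b : Ideal R) (i : ℕ) (h0 : V d (a ⊓ b) i) (h1 : V d (a ⊓ b) (i + 1)) :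
    V d (a ⊔ b) (i + 1) ↔ V d a (i + 1) ∧ V d b (i + 1) := by
  have key : ∀ a b : Ideal R, V d (a ⊓ b) (i + 1) → V d (a ⊔ b) (i + 1) → V d a (i + 1) := by
    intro a b h1 h x hx hdx
    obtain ⟨y, hy, rfl⟩ := h1 x (hx.mono inf_le_left) hdx
    obtain ⟨ya, yb, hya, hyb, rfl⟩ := split (hE _) a b y hy
    rw [map_add] at hx
    have h2 : T a (d (i + 1) yb) := by simpa using hx.sub (hya.map (d (i + 1)))
    obtain ⟨w, hw, hwe⟩ := h (d (i + 1) yb) (T_sup.2 ⟨h2, hyb.map _⟩) (hdd _ _)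
    exact ⟨ya + w, hya.add (T_sup.1 hw).1, by rw [map_add, map_add, hwe]⟩
  constructor
  · intro h
    exact ⟨key a b h1 h, key b a (by rwa [inf_comm]) (by rwa [sup_comm])⟩
  · rintro ⟨ha, hb⟩ x hx hdx
    obtain ⟨y, hy, hyx⟩ := ha x (T_sup.1 hx).1 hdx
    obtain ⟨z, hz, hzx⟩ := hb x (T_sup.1 hx).2 hdx
    obtain ⟨w, hw, hwe⟩ := h0 (y - z) ((hy.mono inf_le_left).sub (hz.mono inf_le_right))
      (by rw [map_sub, hyx, hzx, sub_self])
    obtain ⟨wa, wb, hwa, hwb, rfl⟩ := split (hE _) a b w hw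
    refine ⟨y - d i wa, T_sup.2 ⟨hy.sub (hwa.map _), ?_⟩, by rw [map_sub, hdd, hyx, sub_zero]⟩
    have : y - d i wa = z + d i wb := by
      rw [map_add] at hwe
      have : y = z + (d i wa + d i wb) := by rw [hwe]; abel
      rw [this]; abel
    rw [this]
    exact hz.add (hwb.map _)

end cpx

end alg
section cat
variable {R : Type u} [CommRing R]

/-- the cycle `z` represents the homology class `h` -/
def Rk (K : ChainComplex (ModuleCat.{u} R)ᵒᵖ ℕ) (n : ℕ) (h : (K.homology n).unop)
    (z : (K.X n).unop) : Prop :=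
  ∃ c : (K.opcycles n).unop, (K.pOpcycles n).unop.hom c = z ∧ (K.homologyι n).unop.hom c = h

lemma Rk_exists (K : ChainComplex (ModuleCat.{u} R)ᵒᵖ ℕ) (n : ℕ) (h : (K.homology n).unop) :
    ∃ z, Rk K n h z := by
  obtain ⟨c, hc⟩ := (ModuleCat.epi_iff_surjective (K.homologyι n).unop).1 inferInstance h
  exact ⟨_, c, rfl, hc⟩

lemma Rk_d (K : ChainComplex (ModuleCat.{u} R)ᵒᵖ ℕ) (n : ℕ) (h : (K.homology n).unop)
    (z : (K.X n).unop) (H : Rk K n h z) : (K.d (n + 1) n).unop.hom z = 0 := by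
  obtain ⟨c, rfl, -⟩ := H
  have : (K.pOpcycles n).unop ≫ (K.d (n + 1) n).unop = 0 := by
    rw [← unop_comp, K.d_pOpcycles, unop_zero]
  exact congr($(this).hom c)

lemma Rk_of_d (K : ChainComplex (ModuleCat.{u} R)ᵒᵖ ℕ) (n : ℕ)
    (z : (K.X n).unop) (H : (K.d (n + 1) n).unop.hom z = 0) : ∃ h, Rk K n h z := by
  let φ : ModuleCat.of R R ⟶ (K.X n).unop := ModuleCat.ofHom (LinearMap.toSpanSingleton R _ z)
  have hφ : φ ≫ (K.d (n + 1) n).unop = 0 := by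
    ext
    simpa [φ] using H
  have hφ' : K.d (n + 1) n ≫ φ.op = 0 := by
    have := congr($(hφ).op)
    simpa using this
  let ψ := K.descOpcycles φ.op (n + 1) (by simp) hφ'
  have h1 : ψ.unop ≫ (K.pOpcycles n).unop = φ := by
    rw [← unop_comp, K.p_descOpcycles]; rfl
  refine ⟨_, ψ.unop.hom (1 : R), ?_, rfl⟩
  have := congr($(h1).hom (1 : R))
  simpa [φ] using this

lemma Rk_zero_iff (K : ChainComplex (ModuleCat.{u} R)ᵒᵖ ℕ) (n : ℕ) (h : (K.homology (n + 1)).unop)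
    (z : (K.X (n + 1)).unop) (H : Rk K (n + 1) h z) :
    h = 0 ↔ ∃ w : (K.X n).unop, (K.d (n + 1) n).unop.hom w = z := by
  obtain ⟨c, rfl, rfl⟩ := H
  have hp : Function.Injective (K.pOpcycles (n + 1)).unop.hom :=
    (ModuleCat.mono_iff_injective _).1 inferInstance
  have hd : (K.fromOpcycles (n + 1) n).unop ≫ (K.pOpcycles (n + 1)).unop =
    (K.d (n + 1) n).unop := by rw [← unop_comp, K.p_fromOpcycles]
  have hi : (K.fromOpcycles (n + 1) n).unop ≫ (K.homologyι (n + 1)).unop = 0 := by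
    rw [← unop_comp, K.homologyι_comp_fromOpcycles, unop_zero]
  have hex : (ShortComplex.mk _ _ (K.homologyι_comp_fromOpcycles (n + 1) n)).Exact :=
    ShortComplex.exact_of_f_is_kernel _ (K.homologyIsKernel (n + 1) n (by simp))
  have hex' := hex.unop
  rw [ShortComplex.moduleCat_exact_iff] at hex'
  constructor
  · intro h0
    obtain ⟨w, hw⟩ := hex' c h0
    exact ⟨w, by rw [← hd, ← hw]; rfl⟩
  · rintro ⟨w, hw⟩
    have : c = (K.fromOpcycles (n + 1) n).unop.hom w := by
      apply hp
      rw [← hw, ← hd]; rfl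
    rw [this]
    exact congr($(hi).hom w)

lemma Rk_map {K L : ChainComplex (ModuleCat.{u} R)ᵒᵖ ℕ} (φ : L ⟶ K) (n : ℕ)
    (h : (K.homology n).unop) (z : (K.X n).unop) (H : Rk K n h z) :
    Rk L n ((HomologicalComplex.homologyMap φ n).unop.hom h) ((φ.f n).unop.hom z) := by
  obtain ⟨c, rfl, rfl⟩ := H
  refine ⟨(HomologicalComplex.opcyclesMap φ n).unop.hom c, ?_, ?_⟩
  · have := HomologicalComplex.p_opcyclesMap φ n
    have := congr(($(this).unop).hom c)
    exact this
  · have := HomologicalComplex.homologyι_naturality φ n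
    have := congr(($(this).unop).hom c)
    exact this.symm

/-- Hom complex -/
abbrev HK {A : ModuleCat.{u} R} (P : ProjectiveResolution A) (Y : ModuleCat.{u} R) :
    ChainComplex (ModuleCat.{u} R)ᵒᵖ ℕ :=
  (((linearYoneda R (ModuleCat.{u} R)).obj Y).rightOp.mapHomologicalComplex _).obj P.complex

/-- comparison -/
def RE {A : ModuleCat.{u} R} (P : ProjectiveResolution A) (Y : ModuleCat.{u} R) (n : ℕ)
    (α : ((Ext R (ModuleCat.{u} R) n).obj (op A)).obj Y) (f : P.complex.X n ⟶ Y) : Prop :=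
  Rk (HK P Y) n
    ((P.isoLeftDerivedObj ((linearYoneda R (ModuleCat.{u} R)).obj Y).rightOp n).inv.unop.hom α) f

lemma iso_unop_inj {X Y : (ModuleCat.{u} R)ᵒᵖ} (e : X ≅ Y) (a : X.unop) :
   e.inv.unop.hom a = 0 ↔ a = 0 := by
  have h : e.inv.unop ≫ e.hom.unop = 𝟙 _ := by rw [← unop_comp, e.hom_inv_id, unop_id]
  constructor
  · intro h1
    have h2 : e.hom.unop.hom (e.inv.unop.hom a) = a := congr($(h).hom a)
    rw [← h2, h1, map_zero]
  · rintro rfl; simp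

lemma iso_unop_surj {X Y : (ModuleCat.{u} R)ᵒᵖ} (e : X ≅ Y) (b : Y.unop) :
   ∃ a, e.inv.unop.hom a = b := by
  have h : e.hom.unop ≫ e.inv.unop = 𝟙 _ := by rw [← unop_comp, e.inv_hom_id, unop_id]
  exact ⟨e.hom.unop.hom b, congr($(h).hom b)⟩

variable {A A' : ModuleCat.{u} R} (P : ProjectiveResolution A) (P' : ProjectiveResolution A')
  (Y : ModuleCat.{u} R) (n : ℕ)

lemma RE_exists (α : ((Ext R (ModuleCat.{u} R) n).obj (op A)).obj Y) :
    ∃ f, P.complex.d (n + 1) n ≫ f = 0 ∧ RE P Y n α f := by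
  obtain ⟨z, hz⟩ := Rk_exists (HK P Y) n ((P.isoLeftDerivedObj
    ((linearYoneda R (ModuleCat.{u} R)).obj Y).rightOp n).inv.unop.hom α)
  exact ⟨z, Rk_d _ _ _ _ hz, hz⟩

lemma RE_of_d (f : P.complex.X n ⟶ Y) (hf : P.complex.d (n + 1) n ≫ f = 0) :
    ∃ α, RE P Y n α f := by
  obtain ⟨h, hh⟩ := Rk_of_d (HK P Y) n f hf
  obtain ⟨α, rfl⟩ := iso_unop_surj (P.isoLeftDerivedObj
    ((linearYoneda R (ModuleCat.{u} R)).obj Y).rightOp n) h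
  exact ⟨α, hh⟩

lemma RE_zero_iff (α : ((Ext R (ModuleCat.{u} R) (n + 1)).obj (op A)).obj Y)
    (f : P.complex.X (n + 1) ⟶ Y) (H : RE P Y (n + 1) α f) :
    α = 0 ↔ ∃ g : P.complex.X n ⟶ Y, P.complex.d (n + 1) n ≫ g = f := by
  have := Rk_zero_iff (HK P Y) n _ f H
  refine (iso_unop_inj (P.isoLeftDerivedObj
    ((linearYoneda R (ModuleCat.{u} R)).obj Y).rightOp (n + 1)) α).symm.trans this

lemma RE_map (g : A' ⟶ A) (φ : P'.complex ⟶ P.complex)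
    (comm : φ.f 0 ≫ P.π.f 0 = P'.π.f 0 ≫ g)
    (α : ((Ext R (ModuleCat.{u} R) n).obj (op A)).obj Y)
    (f : P.complex.X n ⟶ Y) (H : RE P Y n α f) :
    RE P' Y n ((((Ext R (ModuleCat.{u} R) n).map g.op).app Y).hom α) (φ.f n ≫ f) := by
  have h1 := Rk_map ((((linearYoneda R (ModuleCat.{u} R)).obj Y).rightOp.mapHomologicalComplex
    _).map φ) n _ _ H
  have h2 := ProjectiveResolution.isoLeftDerivedObj_inv_naturality g P' P φ comm
    ((linearYoneda R (ModuleCat.{u} R)).obj Y).rightOp n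
  have h3 := congr(($(h2).unop).hom α)
  unfold RE
  have h4 : (P'.isoLeftDerivedObj ((linearYoneda R (ModuleCat.{u} R)).obj Y).rightOp n).inv.unop.hom
    ((((Ext R (ModuleCat.{u} R) n).map g.op).app Y).hom α) = _ := h3
  rw [h4]
  exact h1

/-- Vanishing of pullbacks of all Ext classes, transferred to an injective resolution. -/
lemma ext_iff (Q : InjectiveResolution Y) {ι : Type} (B : ι → ModuleCat.{u} R)
    (g : ∀ j, B j ⟶ A) :
    (∀ α : ((Ext R (ModuleCat.{u} R) (n + 1)).obj (op A)).obj Y, ∃ j,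
      (((Ext R (ModuleCat.{u} R) (n + 1)).map (g j).op).app Y).hom α = 0) ↔
    (∀ f : A ⟶ Q.cocomplex.X (n + 1), f ≫ Q.cocomplex.d (n + 1) (n + 2) = 0 →
      ∃ j, ∃ k : B j ⟶ Q.cocomplex.X n, k ≫ Q.cocomplex.d n (n + 1) = g j ≫ f) := by
  let P : ∀ X : ModuleCat.{u} R, ProjectiveResolution X := fun X => projectiveResolution X
  let φ : ∀ j, ProjectiveResolution.Hom (P (B j)) (P A) (g j) := fun j =>
    ⟨ProjectiveResolution.lift (g j) _ _, ProjectiveResolution.lift_commutes_zero _ _ _⟩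
  have hφ : ∀ j, (φ j).hom.f 0 ≫ (P A).π.f 0 = (P (B j)).π.f 0 ≫ g j := fun j =>
    ProjectiveResolution.lift_commutes_zero _ _ _
  have key1 : ∀ (α : ((Ext R (ModuleCat.{u} R) (n + 1)).obj (op A)).obj Y)
      (f : (P A).complex.X (n + 1) ⟶ Y) (hf : (P A).complex.d (n + 2) (n + 1) ≫ f = 0),
      RE (P A) Y (n + 1) α f → ∀ j,
      ((((Ext R (ModuleCat.{u} R) (n + 1)).map (g j).op).app Y).hom α = 0 ↔
      (Abelian.Ext.mk₀ (g j)).comp ((P A).extMk f (n + 2) rfl hf) (zero_add _) = 0) := by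
    intro α f hf H j
    rw [ProjectiveResolution.mk₀_comp_extMk f _ rfl hf (φ j),
      ProjectiveResolution.extMk_eq_zero_iff _ _ _ _ _ n rfl]
    exact RE_zero_iff _ _ _ _ _ (RE_map (P A) (P (B j)) Y (n + 1) (g j) (φ j).hom (hφ j) α f H)
  have key2 : ∀ (f : A ⟶ Q.cocomplex.X (n + 1)) (hf : f ≫ Q.cocomplex.d (n + 1) (n + 2) = 0) j,
      ((Abelian.Ext.mk₀ (g j)).comp (Q.extMk f (n + 2) rfl hf) (zero_add _) = 0 ↔
      ∃ k : B j ⟶ Q.cocomplex.X n, k ≫ Q.cocomplex.d n (n + 1) = g j ≫ f) := by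
    intro f hf j
    rw [InjectiveResolution.mk₀_comp_extMk, InjectiveResolution.extMk_eq_zero_iff _ _ _ _ _ n rfl]
  constructor
  · intro H f hf
    obtain ⟨f', hf', h⟩ := (P A).extMk_surjective (Q.extMk f (n + 2) rfl hf) (n + 2) rfl
    obtain ⟨α, hα⟩ := RE_of_d (P A) Y (n + 1) f' hf'
    obtain ⟨j, hj⟩ := H α
    refine ⟨j, ?_⟩
    rw [← key2 f hf, ← h, ← key1 α f' hf' hα]
    exact hj
  · intro H α
    obtain ⟨f', hf', hα⟩ := RE_exists (P A) Y (n + 1) α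
    obtain ⟨f, hf, h⟩ := Q.extMk_surjective ((P A).extMk f' (n + 2) rfl hf') (n + 2) rfl
    obtain ⟨j, hj⟩ := H f hf
    refine ⟨j, ?_⟩
    rw [key1 α f' hf' hα, ← h, key2 f hf]
    exact hj


open localCohomology in
lemma lc_subsingleton_iff (J : Ideal R) (i : ℕ) (Y : ModuleCat.{u} R) :
    Subsingleton ((localCohomology J i).obj Y) ↔
    ∀ n : ℕ, ∀ α : ((Ext R (ModuleCat.{u} R) i).obj (op (ModuleCat.of R (R ⧸ J ^ n)))).obj Y,
      ∃ m : {m : ℕ // n ≤ m}, (((Ext R (ModuleCat.{u} R) i).map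
        (ModuleCat.ofHom (Submodule.mapQ (J ^ m.1) (J ^ n) LinearMap.id
          (Ideal.pow_le_pow_right m.2))).op).app Y).hom α = 0 := by
  let F := diagram (idealPowersDiagram J) i ⋙ (evaluation _ _).obj Y
  have hfil : IsFiltered (ℕᵒᵖᵒᵖ) := inferInstance
  have : PreservesFilteredColimitsOfSize.{0, 0} (forget (ModuleCat.{u} R)) :=
    preservesFilteredColimitsOfSize_shrink.{0, u, 0, u} _
  have e : (localCohomology J i).obj Y ≅ colimit F :=
    colimitObjIsoColimitCompEvaluation (diagram (idealPowersDiagram J) i) Y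
  have h1 : Subsingleton ((localCohomology J i).obj Y) ↔ Subsingleton ↥(colimit F) :=
    e.toLinearEquiv.toEquiv.subsingleton_congr
  rw [h1]
  constructor
  · intro hs n α
    have h0 : (colimit.ι F (op (op n))).hom α = (colimit.ι F (op (op n))).hom 0 :=
      Subsingleton.elim _ _
    obtain ⟨k, f, g, hfg⟩ := Concrete.colimit_exists_of_rep_eq F (i := op (op n)) (j := op (op n)) α (0 : F.obj _) h0
    refine ⟨⟨k.unop.unop, f.unop.unop.le⟩, ?_⟩
    have h3 : (F.map g).hom (0 : F.obj (op (op n))) = 0 := map_zero _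
    exact hfg.trans h3
  · intro H
    refine ⟨fun a b => ?_⟩
    have : ∀ a : ↥(colimit F), a = 0 := by
      intro a
      obtain ⟨n, α, rfl⟩ := Concrete.colimit_exists_rep F a
      obtain ⟨m, hm⟩ := H n.unop.unop α
      let f : n ⟶ op (op m.1) := (homOfLE m.2).op.op
      have h4 := colimit.w F f
      have h5 : (F.map f).hom α = 0 := hm
      have h6 := congr($(h4).hom α)
      refine h6.symm.trans ?_
      change (colimit.ι F _).hom ((F.map f).hom α) = 0
      rw [h5, map_zero]
    rw [this a, this b]

lemma V_iff [IsNoetherianRing R] (J : Ideal R) (i : ℕ) (Y : ModuleCat.{u} R)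
    (Q : InjectiveResolution Y) :
    Subsingleton ((localCohomology J (i + 1)).obj Y) ↔
      V (fun n => (Q.cocomplex.d n (n + 1)).hom) J i := by
  rw [lc_subsingleton_iff]
  have := fun n => ext_iff (A := ModuleCat.of R (R ⧸ J ^ n)) Y i Q
    (fun m : {m : ℕ // n ≤ m} => ModuleCat.of R (R ⧸ J ^ m.1))
    (fun m => ModuleCat.ofHom (Submodule.mapQ (J ^ m.1) (J ^ n) LinearMap.id
          (Ideal.pow_le_pow_right m.2)))
  simp only [this]
  have kill : ∀ {N : ModuleCat.{u} R} (n : ℕ) (k : ModuleCat.of R (R ⧸ J ^ n) ⟶ N),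
      T J (k.hom (Submodule.Quotient.mk 1)) := by
    intro N n k
    refine T_of_pow n fun r hr => ?_
    rw [← map_smul, ← Submodule.Quotient.mk_smul, smul_eq_mul, mul_one,
      (Submodule.Quotient.mk_eq_zero _).2 hr, map_zero]
  have lift : ∀ {N : ModuleCat.{u} R} (n : ℕ) (e : N), (∀ r ∈ J ^ n, r • e = 0) →
      ∃ k : ModuleCat.of R (R ⧸ J ^ n) ⟶ N, k.hom (Submodule.Quotient.mk 1) = e := by
    intro N n e he
    refine ⟨ModuleCat.ofHom (Submodule.liftQ (J ^ n) (LinearMap.toSpanSingleton R N e)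
      (fun r hr => LinearMap.mem_ker.2 (he r hr))), ?_⟩
    change LinearMap.toSpanSingleton R N e 1 = e
    simp
  have ext1 : ∀ {N : ModuleCat.{u} R} (n : ℕ) (k k' : ModuleCat.of R (R ⧸ J ^ n) ⟶ N),
      k.hom (Submodule.Quotient.mk 1) = k'.hom (Submodule.Quotient.mk 1) → k = k' := by
    intro N n k k' h
    apply ModuleCat.hom_ext
    apply Submodule.linearMap_qext
    apply LinearMap.ext_ring
    exact h
  constructor
  · intro H e he hde
    obtain ⟨n, hn⟩ := he.pow
    obtain ⟨f, hf⟩ := lift n e hn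
    obtain ⟨m, k, hk⟩ := H n f (ext1 _ _ _ (by
      change (Q.cocomplex.d (i + 1) (i + 2)).hom (f.hom _) = 0
      rw [hf]; exact hde))
    refine ⟨k.hom (Submodule.Quotient.mk 1), kill _ k, ?_⟩
    have := congr($(hk).hom (Submodule.Quotient.mk 1))
    refine Eq.trans this ?_
    exact hf
  · intro H n f hf
    obtain ⟨w, hw, hdw⟩ := H (f.hom (Submodule.Quotient.mk 1)) (kill n f)
      congr($(hf).hom (Submodule.Quotient.mk 1))
    obtain ⟨m, hm⟩ := hw.pow
    obtain ⟨k, hk⟩ := lift (max n m) w (fun r hr => hm r (Ideal.pow_le_pow_right (le_max_right _ _) hr))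
    refine ⟨⟨max n m, le_max_left _ _⟩, k, ext1 _ _ _ ?_⟩
    change (Q.cocomplex.d i (i + 1)).hom (k.hom _) = f.hom (Submodule.Quotient.mk 1)
    rw [hk, hdw]


lemma mem_radical_of_linked {M : Type u} [AddCommGroup M] [Module R M] [Module.Finite R M]
    (I : Ideal R) (y : R) (hy : ∀ m : M, y • m ∈ I • (⊤ : Submodule R M)) :
    y ∈ (I ⊔ Module.annihilator R M).radical := by
  obtain ⟨p, hp, -, hc, hz⟩ :=
    LinearMap.exists_monic_and_natDegree_eq_and_coeff_mem_pow_and_aeval_eq_zero R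
      (algebraMap R (Module.End R M) y) I (by
        rintro _ ⟨m, rfl⟩
        exact hy m)
  refine ⟨p.natDegree, ?_⟩
  have h1 : p.eval y ∈ Module.annihilator R M := by
    rw [Polynomial.aeval_algebraMap_apply] at hz
    rw [Module.mem_annihilator]
    intro m
    have := LinearMap.congr_fun hz m
    simpa using this
  have h2 : p.eval y - y ^ p.natDegree ∈ I := by
    rw [Polynomial.eval_eq_sum_range, Finset.sum_range_succ, hp.coeff_natDegree, one_mul,
      add_sub_cancel_right]
    refine I.sum_mem fun k hk => I.mul_mem_right _ ?_
    have hk' := Finset.mem_range.1 hk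
    exact Ideal.pow_le_self (by omega) (hc k)
  have h3 : y ^ p.natDegree = -(p.eval y - y ^ p.natDegree) + p.eval y := by ring
  rw [h3]
  exact Submodule.add_mem_sup (I.neg_mem h2) h1

lemma main [IsNoetherianRing R] {M : Type u} [AddCommGroup M] [Module R M] [Module.Finite R M]
    (a b : Ideal R) (rs : List R) (hI : Ideal.ofList rs ≤ a ⊓ b)
    (hab : ∀ x ∈ a ⊓ b, ∀ m : M, (x * x) • m ∈ Ideal.ofList rs • (⊤ : Submodule R M))
    (i : ℕ) (hi : rs.length + 2 ≤ i) :
    Nontrivial ((localCohomology (a + b) i).obj (ModuleCat.of R M)) ↔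
      Nontrivial ((localCohomology a i).obj (ModuleCat.of R M)) ∨
      Nontrivial ((localCohomology b i).obj (ModuleCat.of R M)) := by
  obtain ⟨j, rfl⟩ : ∃ j, i = j + 1 + 1 := ⟨i - 2, by omega⟩
  let Q : InjectiveResolution (ModuleCat.of R M) := injectiveResolution _
  have hE : ∀ n, Module.Injective R (Q.cocomplex.X n) := fun n =>
    haveI : Injective (ModuleCat.of R (Q.cocomplex.X n)) := Q.injective n
    Module.injective_module_of_injective_object R _
  have hdd : ∀ n (e : Q.cocomplex.X n),
      (Q.cocomplex.d (n + 1) (n + 1 + 1)).hom ((Q.cocomplex.d n (n + 1)).hom e) = 0 := by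
    intro n e
    exact congr($(Q.cocomplex.d_comp_d n (n + 1) (n + 1 + 1)).hom e)
  have hex : ∀ n (e : Q.cocomplex.X (n + 1)), (Q.cocomplex.d (n + 1) (n + 1 + 1)).hom e = 0 →
      ∃ f, (Q.cocomplex.d n (n + 1)).hom f = e := by
    intro n e he
    exact (ShortComplex.moduleCat_exact_iff _).1 (Q.exact_succ n) e he
  have hN : ∀ x ∈ Module.annihilator R M, ∀ e : Q.cocomplex.X 0,
      (Q.cocomplex.d 0 1).hom e = 0 → x • e = 0 := by
    intro x hx e he
    obtain ⟨m, rfl⟩ := (ShortComplex.moduleCat_exact_iff _).1 Q.exact₀ e he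
    have hm : x • (show M from m) = 0 := Module.mem_annihilator.1 hx _
    have hm' : x • m = 0 := hm
    rw [← map_smul, hm', map_zero]
  have hV : ∀ k, rs.length ≤ k → V (fun n => (Q.cocomplex.d n (n + 1)).hom) (a ⊓ b) k := by
    intro k hk
    have h1 := V_list (fun n => (Q.cocomplex.d n (n + 1)).hom) hE hdd hex rs k hk
    rw [V_ann_ideal _ hE hdd hex (Module.annihilator R M) hN] at h1 ⊢
    refine V_congr _ ?_ ?_ k h1
    · exact (sup_le_sup_right hI _).trans Ideal.le_radical
    · refine sup_le (fun x hx => ?_) (le_sup_right.trans Ideal.le_radical)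
      have := mem_radical_of_linked (M := M) (Ideal.ofList rs) (x * x) (hab x hx)
      rw [← pow_two] at this
      exact (Ideal.radical_isRadical _) ⟨2, this⟩
  have hMV := MV _ hE hdd a b j (hV j (by omega)) (hV (j + 1) (by omega))
  rw [← V_iff, ← V_iff, ← V_iff] at hMV
  rw [← not_iff_not, not_or]
  simpa only [not_nontrivial_iff_subsingleton, Submodule.add_eq_sup] using hMV

end cat
end LC

variable {R : Type u} [CommRing R] [IsNoetherianRing R]
variable {M : Type u} [AddCommGroup M] [Module R M] [Module.Finite R M] [Nontrivial M]

theorem stmt4 (a b : Ideal R) (rs : List R)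
    (hreg : RingTheory.Sequence.IsRegular M rs)
    (h : Ideal.IsLinkedBy M (Ideal.ofList rs) a b)
    (hcd : (rs.length : ℕ∞) + 1 ≤ cohDim (a + b) M) :
    cohDim (a + b) M =
      max (max (cohDim a M) (cohDim b M)) ((rs.length : ℕ∞) + 1) := by
  obtain ⟨-, hI, -, -, h1, h2⟩ := h
  have hab : ∀ x ∈ a ⊓ b, ∀ m : M, (x * x) • m ∈ Ideal.ofList rs • (⊤ : Submodule R M) := by
    intro x hx m
    have hm : x • m ∈ b • (⊤ : Submodule R M) := Submodule.smul_mem_smul hx.2 trivial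
    rw [← h1, Submodule.modColon] at hm
    simp only [Submodule.mem_iInf] at hm
    have := hm x hx.1
    rw [mul_smul]
    exact this
  have key := LC.main (M := M) a b rs hI hab
  have hle : ∀ (c : Ideal R) (i : ℕ), Nontrivial ((localCohomology c i).obj (ModuleCat.of R M)) →
      (i : ℕ∞) ≤ cohDim c M := fun c i hi => le_sSup ⟨i, rfl, hi⟩
  have hcase : ∀ i : ℕ, rs.length + 2 ≤ i ∨ (i : ℕ∞) ≤ (rs.length : ℕ∞) + 1 := by
    intro i
    rcases Nat.lt_or_ge i (rs.length + 2) with h | h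
    · right
      have : i ≤ rs.length + 1 := by omega
      exact_mod_cast this
    · exact Or.inl h
  apply le_antisymm
  · refine sSup_le ?_
    rintro _ ⟨i, rfl, hi⟩
    rcases hcase i with h | h
    · rcases (key i h).1 hi with h' | h'
      · exact (hle a i h').trans (le_max_of_le_left (le_max_left _ _))
      · exact (hle b i h').trans (le_max_of_le_left (le_max_right _ _))
    · exact le_max_of_le_right h
  · refine max_le (max_le ?_ ?_) hcd
    · refine sSup_le ?_
      rintro _ ⟨i, rfl, hi⟩
      rcases hcase i with h | h
      · exact hle _ i ((key i h).2 (Or.inl hi))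
      · exact h.trans hcd
    · refine sSup_le ?_
      rintro _ ⟨i, rfl, hi⟩
      rcases hcase i with h | h
      · exact hle _ i ((key i h).2 (Or.inr hi))
      · exact h.trans hcd
end
end

section
/- Let (R, m) be a Noetherian local ring and x_1, …, x_n ∈ m an R-regular sequence with n ≥ 4. Then for all 1 < j ≤ ⌊n/2⌋ and any permutation (i_1, …, i_{2j}) of distinct indices from {1, …, n}, the ideals (x_{i_1}, …, x_{i_j}) and (x_{i_{j+1}}, …, x_{i_{2j}}) are not linked over R. -/
universe u

open RingTheory.Sequence CategoryTheory

noncomputable section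

/-- Two ideals `a` and `b` of `R` are linked (over `R`) if there is an ideal
`I ⊆ a ⊓ b` generated by an `R`-regular sequence with `b = I :_R a` and `a = I :_R b`. -/
def LinkedOverR {R : Type u} [CommRing R] (a b : Ideal R) : Prop :=
  ∃ I : Ideal R,
    (∃ rs : List R, RingTheory.Sequence.IsRegular R rs ∧ I = Ideal.ofList rs) ∧
    I ≤ a ⊓ b ∧ b = Submodule.colon I a ∧ a = Submodule.colon I b

theorem aux_mem_of_append {R : Type u} [CommRing R] {rs : List R} {r : R}
    (h : IsWeaklyRegular R (rs ++ [r])) {s : R} (hs : r * s ∈ Ideal.ofList rs) :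
    s ∈ Ideal.ofList rs := by
  have h2 := ((isWeaklyRegular_append_iff R rs [r]).1 h).2
  rw [isWeaklyRegular_singleton_iff, isSMulRegular_quotient_iff_mem_of_smul_mem] at h2
  simpa using h2 s (by simpa using hs)

theorem aux_length_le_height {R : Type u} [CommRing R] (rs : List R)
    (h : IsWeaklyRegular R rs) (p : Ideal R) [p.IsPrime] (hp : Ideal.ofList rs ≤ p) :
    (rs.length : ℕ∞) ≤ p.height := by
  induction rs using List.reverseRecOn generalizing p with
  | nil => simp
  | append_singleton rs r ih =>
    rw [Ideal.ofList_append, sup_le_iff, Ideal.ofList_singleton,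
      Ideal.span_singleton_le_iff_mem] at hp
    obtain ⟨q, hq, hqp⟩ := Ideal.exists_minimalPrimes_le hp.1
    have : q.IsPrime := hq.1.1
    have hlt : q < p := by
      refine lt_of_le_of_ne hqp ?_
      rintro rfl
      obtain ⟨y, hy, hxy⟩ := Ideal.exists_mul_mem_of_mem_minimalPrimes hq hp.2
      exact hy (aux_mem_of_append h hxy)
    have h1 := ih ((isWeaklyRegular_append_iff R rs [r]).1 h).1 q hq.1.2
    have h2 := Ideal.height_add_one_le_of_lt_of_isPrime hlt
    refine le_trans ?_ h2
    push_cast [List.length_append, List.length_singleton]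
    gcongr

/-- `x i` is a nonzerodivisor modulo the ideal generated by any finset of the others. -/
theorem aux_perm {R : Type u} [CommRing R] [IsNoetherianRing R] [IsLocalRing R]
    {n : ℕ} {x : Fin n → R} (hreg : IsRegular R (List.ofFn x)) (T : Finset (Fin n))
    (i : Fin n) (hi : i ∉ T) (s : R) (hs : x i * s ∈ Ideal.span (x '' T)) :
    s ∈ Ideal.span (x '' T) := by
  have key : List.Perm (List.finRange n)
      ((T.toList ++ [i]) ++ (Finset.univ \ insert i T).toList) := by
    rw [List.perm_ext_iff_of_nodup (List.nodup_finRange n)]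
    · intro a
      simp
      tauto
    · simp only [List.nodup_append, Finset.nodup_toList, List.nodup_singleton, true_and]
      constructor
      · intro a ha b hb
        simp at ha hb
        subst hb
        rintro rfl
        exact hi ha
      · intro a ha b hb
        simp at ha hb
        rintro rfl
        tauto
  have key2 := key.map x
  rw [← List.ofFn_eq_map, List.map_append, List.map_append] at key2
  have h1 := (IsLocalRing.isRegular_of_perm hreg key2).toIsWeaklyRegular
  have h2 := ((isWeaklyRegular_append_iff R _ _).1 h1).1
  have e : Ideal.ofList (T.toList.map x) = Ideal.span (x '' T) := by
    unfold Ideal.ofList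
    congr 1
    ext a
    simp
  rw [← e] at hs ⊢
  exact aux_mem_of_append h2 hs

theorem aux_coeff {R : Type u} [CommRing R] {ν : Type} [DecidableEq ν] {x : ν → R}
  (H : ∀ (T : Finset ν) (i : ν), i ∉ T → ∀ s : R,
    x i * s ∈ Ideal.span (x '' T) → s ∈ Ideal.span (x '' T))
    (S T : Finset ν) (hST : Disjoint S T) (c : ν → R)
    (hc : ∑ i ∈ S, c i * x i ∈ Ideal.span (x '' T)) (i : ν) (hi : i ∈ S) :
    c i ∈ Ideal.span (x '' (S.erase i ∪ T : Finset ν)) := by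
  apply H _ i
  · simp [Finset.disjoint_left.1 hST hi]
  have h1 : Ideal.span (x '' T) ≤ Ideal.span (x '' (S.erase i ∪ T : Finset ν)) :=
    Ideal.span_mono (Set.image_mono (by simp))
  have h2 : ∑ k ∈ S.erase i, c k * x k ∈ Ideal.span (x '' (S.erase i ∪ T : Finset ν)) := by
    refine Ideal.sum_mem _ fun k hk => Ideal.mul_mem_left _ _ (Ideal.subset_span ⟨k, ?_, rfl⟩)
    simp only [Finset.coe_union, Set.mem_union, Finset.mem_coe]
    exact Or.inl hk
  have h3 := h1 hc
  rw [← Finset.add_sum_erase S _ hi] at h3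
  rw [mul_comm]
  exact (Ideal.add_mem_iff_left _ h2).1 h3

theorem aux_inf {R : Type u} [CommRing R] {ν : Type} [DecidableEq ν] {x : ν → R}
  (H : ∀ (T : Finset ν) (i : ν), i ∉ T → ∀ s : R,
    x i * s ∈ Ideal.span (x '' T) → s ∈ Ideal.span (x '' T))
    (S T : Finset ν) (hST : Disjoint S T) :
    Ideal.span (x '' S) ⊓ Ideal.span (x '' T) ≤ Ideal.span (x '' S) * Ideal.span (x '' T) := by
  induction S using Finset.induction_on with
  | empty => simp
  | insert k S hk ih =>
    rw [Finset.disjoint_insert_left] at hST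
    have ih := ih hST.2
    rintro r ⟨hr1, hr2⟩
    rw [Finset.coe_insert, Set.image_insert_eq] at hr1 ⊢
    obtain ⟨s, r', hr', rfl⟩ := Ideal.mem_span_insert.1 hr1
    have hsub : Ideal.span (x '' (S ∪ T : Finset ν)) = Ideal.span (x '' S) ⊔ Ideal.span (x '' T) := by
      rw [Finset.coe_union, Set.image_union, Ideal.span_union]
    have hs : s ∈ Ideal.span (x '' (S ∪ T : Finset ν)) := by
      apply H _ k (by simp [hk, hST.1])
      rw [hsub]
      have : x k * s = (s * x k + r') - r' := by ring
      rw [this]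
      exact sub_mem (Ideal.mem_sup_right hr2) (Ideal.mem_sup_left hr')
    rw [hsub] at hs
    obtain ⟨u, hu, v, hv, rfl⟩ := Submodule.mem_sup.1 hs
    have hle : Ideal.span (x '' S) ≤ Ideal.span (insert (x k) (x '' S)) :=
      Ideal.span_mono (Set.subset_insert _ _)
    have hxv : x k * v ∈ Ideal.span (insert (x k) (x '' S)) * Ideal.span (x '' T) :=
      Ideal.mul_mem_mul (Ideal.subset_span (Set.mem_insert _ _)) hv
    have hrest : u * x k + r' ∈ Ideal.span (x '' S) ⊓ Ideal.span (x '' T) := by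
      refine ⟨add_mem (Ideal.mul_mem_right _ _ hu) hr', ?_⟩
      have : u * x k + r' = ((u + v) * x k + r') - x k * v := by ring
      rw [this]
      exact sub_mem hr2 (Ideal.mul_mem_left _ _ hv)
    have : (u + v) * x k + r' = (u * x k + r') + x k * v := by ring
    rw [this]
    exact add_mem (Ideal.mul_mono_left hle (ih hrest)) hxv

theorem aux_indep {R : Type u} [CommRing R] {ν : Type} [DecidableEq ν] {x : ν → R}
  (H : ∀ (T : Finset ν) (i : ν), i ∉ T → ∀ s : R,
    x i * s ∈ Ideal.span (x '' T) → s ∈ Ideal.span (x '' T))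
    [IsLocalRing R] (hx : ∀ i, x i ∈ IsLocalRing.maximalIdeal R)
    (S T : Finset ν) (hST : Disjoint S T) (c : S × T → R)
    (hc : ∑ p, c p * (x p.1 * x p.2) = 0) (p : S × T) : c p ∈ IsLocalRing.maximalIdeal R := by
  have hm : ∀ U : Finset ν, Ideal.span (x '' U) ≤ IsLocalRing.maximalIdeal R := by
    intro U
    rw [Ideal.span_le]
    rintro _ ⟨i, -, rfl⟩
    exact hx i
  let c' : ν → ν → R := fun k l => if h : k ∈ S ∧ l ∈ T then c (⟨k, h.1⟩, ⟨l, h.2⟩) else 0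
  have hcc : ∑ k ∈ S, (∑ l ∈ T, c' k l * x l) * x k = 0 := by
    rw [← hc, Fintype.sum_prod_type, ← Finset.sum_coe_sort S]
    refine Finset.sum_congr rfl fun k _ => ?_
    rw [Finset.sum_mul, ← Finset.sum_coe_sort T]
    refine Finset.sum_congr rfl fun l _ => ?_
    simp [c']
    ring
  obtain ⟨⟨k, hk⟩, ⟨l, hl⟩⟩ := p
  have h1 := aux_coeff H S ∅ (by simp) (fun k => ∑ l ∈ T, c' k l * x l)
    (by simp only [hcc]; exact zero_mem _) k hk
  have h2 := aux_coeff H T (S.erase k) (hST.symm.mono_right (Finset.erase_subset _ _)) (c' k)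
    (by simpa using h1) l hl
  have h3 := hm _ h2
  simpa [c', hk, hl] using h3

theorem aux_main {R : Type u} [CommRing R] {ν : Type} [DecidableEq ν] {x : ν → R}
  (H : ∀ (T : Finset ν) (i : ν), i ∉ T → ∀ s : R,
    x i * s ∈ Ideal.span (x '' T) → s ∈ Ideal.span (x '' T))
    [IsLocalRing R] (hx : ∀ i, x i ∈ IsLocalRing.maximalIdeal R)
    (S T : Finset ν) (hST : Disjoint S T) (t : ℕ) (z : Fin t → R)
    (hz : Ideal.span (Set.range z) = Ideal.span (x '' S) * Ideal.span (x '' T)) :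
    S.card * T.card ≤ t := by
  classical
  let w : S × T → R := fun p => x p.1 * x p.2
  have hw : Ideal.span (x '' S) * Ideal.span (x '' T) = Ideal.span (Set.range w) := by
    rw [Ideal.span_mul_span']
    congr 1
    ext a
    simp [w, Set.mem_mul]
  rw [hw] at hz
  have hA : ∀ i, ∃ c : S × T → R, ∑ p, c p * w p = z i := by
    intro i
    have : z i ∈ Ideal.span (Set.range w) := hz ▸ Ideal.subset_span ⟨i, rfl⟩
    exact Ideal.mem_span_range_iff_exists_fun.1 this
  have hB : ∀ p, ∃ c : Fin t → R, ∑ i, c i * z i = w p := by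
    intro p
    have : w p ∈ Ideal.span (Set.range z) := hz ▸ Ideal.subset_span ⟨p, rfl⟩
    exact Ideal.mem_span_range_iff_exists_fun.1 this
  choose A hA using hA
  choose B hB using hB
  let A' : Matrix (Fin t) (S × T) R := Matrix.of A
  let B' : Matrix (S × T) (Fin t) R := Matrix.of B
  have hAw : A'.mulVec w = z := by
    ext i
    exact hA i
  have hBz : B'.mulVec z = w := by
    ext i
    exact hB i
  have hBA : (B' * A' - 1).mulVec w = 0 := by
    rw [Matrix.sub_mulVec, ← Matrix.mulVec_mulVec, hAw, hBz, Matrix.one_mulVec, sub_self]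
  have hmem : ∀ p q, (B' * A' - 1 : Matrix (S × T) (S × T) R) p q ∈ IsLocalRing.maximalIdeal R := fun p q =>
    aux_indep H hx S T hST (fun q => (B' * A' - 1 : Matrix (S × T) (S × T) R) p q) (congrFun hBA p) q
  have hone : (B'.map (IsLocalRing.residue R)) * (A'.map (IsLocalRing.residue R)) = 1 := by
    rw [← Matrix.map_mul]
    ext p q
    have h0 := (IsLocalRing.residue_eq_zero_iff _).2 (hmem p q)
    rw [Matrix.sub_apply, map_sub, sub_eq_zero] at h0
    rw [Matrix.map_apply, h0, Matrix.one_apply, Matrix.one_apply]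
    split_ifs <;> simp
  have hr := Matrix.rank_mul_le_left (B'.map (IsLocalRing.residue R)) (A'.map (IsLocalRing.residue R))
  rw [hone, Matrix.rank_one] at hr
  have := hr.trans (Matrix.rank_le_card_width _)
  simpa using this

theorem stmt5 {R : Type u} [CommRing R] [IsNoetherianRing R] [IsLocalRing R]
    (n : ℕ) (hn : 4 ≤ n) (x : Fin n → R)
    (hx : ∀ i, x i ∈ IsLocalRing.maximalIdeal R)
    (hreg : RingTheory.Sequence.IsRegular R (List.ofFn x))
    (j : ℕ) (hj1 : 1 < j) (hj2 : 2 * j ≤ n)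
    (ι : Fin (2 * j) → Fin n) (hι : Function.Injective ι) :
    ¬ LinkedOverR (Ideal.span {r | ∃ k : Fin (2 * j), (k : ℕ) < j ∧ r = x (ι k)})
        (Ideal.span {r | ∃ k : Fin (2 * j), j ≤ (k : ℕ) ∧ r = x (ι k)}) := by
  classical
  rintro ⟨I, ⟨rs, hrs, rfl⟩, hI, hb, ha⟩
  let S : Finset (Fin n) := (Finset.univ.filter fun k : Fin (2 * j) => (k : ℕ) < j).image ι
  let T : Finset (Fin n) := (Finset.univ.filter fun k : Fin (2 * j) => j ≤ (k : ℕ)).image ι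
  have hST : Disjoint S T := by
    rw [Finset.disjoint_left]
    intro a h1 h2
    simp only [S, T, Finset.mem_image, Finset.mem_filter, Finset.mem_univ, true_and] at h1 h2
    obtain ⟨k, hk, rfl⟩ := h1
    obtain ⟨l, hl, h⟩ := h2
    have := hι h
    subst this
    omega
  have hScard : S.card = j := by
    rw [Finset.card_image_of_injective _ hι, Fin.card_filter_val_lt]
    omega
  have hTcard : T.card = j := by
    have h1 := Finset.card_filter_add_card_filter_not
      (s := (Finset.univ : Finset (Fin (2 * j)))) (fun k : Fin (2 * j) => (k : ℕ) < j)
    rw [Finset.card_image_of_injective _ hι] at hScard ⊢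
    simp only [not_lt, Finset.card_univ, Fintype.card_fin] at h1
    omega
  have hS : {r | ∃ k : Fin (2 * j), (k : ℕ) < j ∧ r = x (ι k)} = x '' S := by
    ext r
    simp [S, eq_comm]
  have hT : {r | ∃ k : Fin (2 * j), j ≤ (k : ℕ) ∧ r = x (ι k)} = x '' T := by
    ext r
    simp [T, eq_comm]
  rw [hS, hT] at hI hb ha
  have H := aux_perm hreg
  have hIeq : Ideal.ofList rs = Ideal.span (x '' S) * Ideal.span (x '' T) := by
    apply le_antisymm
    · exact hI.trans (aux_inf H S T hST)
    · rw [Ideal.mul_le]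
      intro r hr s hs
      rw [hb, Submodule.mem_colon] at hs
      have := hs r hr
      rwa [smul_eq_mul, mul_comm] at this
  have hne : Ideal.span (x '' S) ≤ IsLocalRing.maximalIdeal R := by
    rw [Ideal.span_le]
    rintro _ ⟨i, -, rfl⟩
    exact hx i
  obtain ⟨p, hp, -⟩ := Ideal.exists_minimalPrimes_le hne
  have : p.IsPrime := hp.1.1
  have hle1 := aux_length_le_height rs hrs.toIsWeaklyRegular p
    ((hI.trans inf_le_left).trans hp.1.2)
  have hle2 := Ideal.height_le_card_of_mem_minimalPrimes_span
    (S.finite_toSet.image x) hp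
  have hle3 : rs.length ≤ (x '' S).ncard := by exact_mod_cast hle1.trans hle2
  have hle4 : (x '' S).ncard ≤ j := by
    rw [← hScard, ← Set.ncard_coe_finset S]
    exact Set.ncard_image_le S.finite_toSet
  have hle5 := aux_main H hx S T hST rs.length rs.get (by
    rw [← hIeq, Set.range_list_get]
    )
  rw [hScard, hTcard] at hle5
  nlinarith
end
end

section
/- Let a and b be ideals linked by the zero ideal over M (so abM = 0, bM = 0 :_M a, aM = 0 :_M b, aM ≠ M ≠ bM). Then cd(a, M) = cd(a, M/bM), where cd denotes cohomological dimension via local cohomology. -/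
universe u

open RingTheory.Sequence CategoryTheory

noncomputable section

section LCauxSection
open CategoryTheory.Limits Opposite

namespace LCaux
variable {R : Type u} [CommRing R]

section generic
variable {C : Type*} [Category C] [Abelian C] 

lemma pOp_inj (K : ChainComplex (ModuleCat.{u} R)ᵒᵖ ℕ) (n : ℕ) :
    Function.Injective (K.pOpcycles n).unop.hom := by
  rw [← ModuleCat.mono_iff_injective]; infer_instance

lemma hι_surj (K : ChainComplex (ModuleCat.{u} R)ᵒᵖ ℕ) (n : ℕ) :
    Function.Surjective (K.homologyι n).unop.hom := by
  rw [← ModuleCat.epi_iff_surjective]; infer_instance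

lemma lift_cocycle (K : ChainComplex (ModuleCat.{u} R)ᵒᵖ ℕ) (n : ℕ) (f : ↑(unop (K.X n)))
    (hf : (K.d (n+1) n).unop.hom f = 0) : ∃ z, (K.pOpcycles n).unop.hom z = f := by
  let S : ShortComplex (ModuleCat.{u} R)ᵒᵖ := ShortComplex.mk (K.d (n+1) n) (K.pOpcycles n) (by simp)
  have hS : S.Exact := S.exact_of_g_is_cokernel (K.opcyclesIsCokernel (n+1) n (by simp))
  have := (ShortComplex.moduleCat_exact_iff _).1 hS.unop
  exact this f hf

lemma hι_zero (K : ChainComplex (ModuleCat.{u} R)ᵒᵖ ℕ) (n : ℕ) (z : ↑(unop (K.opcycles (n+1)))) :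
    (K.homologyι (n+1)).unop.hom z = 0 ↔ ∃ y, (K.fromOpcycles (n+1) n).unop.hom y = z := by
  let S : ShortComplex (ModuleCat.{u} R)ᵒᵖ :=
    ShortComplex.mk (K.homologyι (n+1)) (K.fromOpcycles (n+1) n) (by simp)
  have hS : S.Exact := S.exact_of_f_is_kernel (K.homologyIsKernel (n+1) n (by simp))
  constructor
  · have := (ShortComplex.moduleCat_exact_iff _).1 hS.unop
    exact this z
  · rintro ⟨y, rfl⟩
    have h := S.unop.zero
    exact congr($(h).hom y)

variable (F : C ⥤ (ModuleCat.{u} R)ᵒᵖ) [F.Additive] [EnoughProjectives C]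

/-- x in unop of derived functor is represented by cocycle f -/
def Rep {X : C} (P : ProjectiveResolution X) (n : ℕ) (x : ↑(unop ((F.leftDerived n).obj X)))
    (f : ↑(unop (F.obj (P.complex.X n)))) : Prop :=
  ∃ z : ↑(unop (((F.mapHomologicalComplex _).obj P.complex).opcycles n)),
    (((F.mapHomologicalComplex _).obj P.complex).pOpcycles n).unop.hom z = f ∧
    (P.isoLeftDerivedObj F n).hom.unop.hom
      ((((F.mapHomologicalComplex _).obj P.complex).homologyι n).unop.hom z) = x

variable {F}
lemma Rep.exists_cocycle {X : C} (P : ProjectiveResolution X) (n : ℕ)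
    (x : ↑(unop ((F.leftDerived n).obj X))) :
    ∃ f, Rep F P n x f ∧ (F.map (P.complex.d (n+1) n)).unop.hom f = 0 := by
  have hs : Function.Surjective (P.isoLeftDerivedObj F n).hom.unop.hom := by
    rw [← ModuleCat.epi_iff_surjective]; infer_instance
  obtain ⟨w, rfl⟩ := hs x
  obtain ⟨z, rfl⟩ := hι_surj _ n w
  refine ⟨_, ⟨z, rfl, rfl⟩, ?_⟩
  have h := ((F.mapHomologicalComplex _).obj P.complex).d_pOpcycles (n+1) n
  exact congr($(h).unop.hom z)

lemma Rep.exists_class {X : C} (P : ProjectiveResolution X) (n : ℕ)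
    (f : ↑(unop (F.obj (P.complex.X n)))) (hf : (F.map (P.complex.d (n+1) n)).unop.hom f = 0) :
    ∃ x, Rep F P n x f := by
  obtain ⟨z, hz⟩ := lift_cocycle ((F.mapHomologicalComplex _).obj P.complex) n f hf
  exact ⟨_, z, hz, rfl⟩

lemma Rep.eq_zero_iff {X : C} {P : ProjectiveResolution X} {n : ℕ}
    {x : ↑(unop ((F.leftDerived (n+1)).obj X))} {f} (h : Rep F P (n+1) x f) :
    x = 0 ↔ ∃ g, (F.map (P.complex.d (n+1) n)).unop.hom g = f := by
  obtain ⟨z, rfl, rfl⟩ := h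
  have hs : Function.Injective (P.isoLeftDerivedObj F (n+1)).hom.unop.hom := by
    rw [← ModuleCat.mono_iff_injective]; infer_instance
  refine (map_eq_zero_iff _ hs).trans ((hι_zero _ n z).trans ?_)
  have h := ((F.mapHomologicalComplex _).obj P.complex).p_fromOpcycles (n+1) n
  refine exists_congr fun y => ?_
  refine (pOp_inj ((F.mapHomologicalComplex _).obj P.complex) (n+1)).eq_iff.symm.trans ?_
  have h' := congr($(h).unop.hom y)
  exact Eq.congr_left h'

lemma Rep.map {X X' : C} {P : ProjectiveResolution X} {P' : ProjectiveResolution X'} {n : ℕ}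
    {x : ↑(unop ((F.leftDerived n).obj X))} {f} (h : Rep F P n x f) (θ : X' ⟶ X)
    (φ : P'.complex ⟶ P.complex) (comm : φ.f 0 ≫ P.π.f 0 = P'.π.f 0 ≫ θ) :
    Rep F P' n (((F.leftDerived n).map θ).unop.hom x) ((F.map (φ.f n)).unop.hom f) := by
  obtain ⟨z, rfl, rfl⟩ := h
  refine ⟨(HomologicalComplex.opcyclesMap ((F.mapHomologicalComplex _).map φ) n).unop.hom z,
    ?_, ?_⟩
  · have h := HomologicalComplex.p_opcyclesMap ((F.mapHomologicalComplex _).map φ) n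
    exact congr($(h).unop.hom z)
  · have h1 := HomologicalComplex.homologyι_naturality ((F.mapHomologicalComplex _).map φ) n
    have h2 := ProjectiveResolution.isoLeftDerivedObj_hom_naturality θ P' P φ comm F n
    have h1' := congr($(h1).unop.hom z)
    have h2' := congr($(h2).unop.hom
      ((((F.mapHomologicalComplex _).obj P.complex).homologyι n).unop.hom z))
    refine Eq.trans ?_ h2'.symm
    exact congr((P'.isoLeftDerivedObj F n).hom.unop.hom $(h1'.symm))
end generic
/-- `a`-torsion submodule -/
def tors (a : Ideal R) (E : Type u) [AddCommGroup E] [Module R E] : Submodule R E where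
  carrier := {x | ∃ m : ℕ, ∀ r ∈ a ^ m, r • x = 0}
  zero_mem' := ⟨0, by simp⟩
  add_mem' := by
    rintro x y ⟨m, hm⟩ ⟨n, hn⟩
    refine ⟨max m n, fun r hr => ?_⟩
    rw [smul_add, hm r (Ideal.pow_le_pow_right (le_max_left _ _) hr),
      hn r (Ideal.pow_le_pow_right (le_max_right _ _) hr), add_zero]
  smul_mem' := by
    rintro c x ⟨m, hm⟩
    exact ⟨m, fun r hr => by rw [smul_comm, hm r hr, smul_zero]⟩

def IsTors (a : Ideal R) (E : Type u) [AddCommGroup E] [Module R E] : Prop :=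
  ∀ x : E, ∃ m : ℕ, ∀ r ∈ a ^ m, r • x = 0

lemma isTors_tors (a : Ideal R) (E : Type u) [AddCommGroup E] [Module R E] :
    IsTors a (tors a E) := fun x => by
  obtain ⟨m, hm⟩ := x.2
  exact ⟨m, fun r hr => Subtype.ext (hm r hr)⟩

lemma bounded [IsNoetherianRing R] (a : Ideal R) {I E : Type u} [AddCommGroup E] [Module R E]
    [AddCommGroup I] [Module R I] [Module.Finite R I]
    (hE : IsTors a E) (g : I →ₗ[R] E) : ∃ n : ℕ, ∀ x, ∀ r ∈ a ^ n, r • g x = 0 := by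
  let T : ℕ →o Submodule R I :=
    { toFun := fun n =>
        { carrier := {x | ∀ r ∈ a ^ n, r • g x = 0}
          zero_mem' := by simp
          add_mem' := fun {x y} hx hy r hr => by
            rw [map_add, smul_add, hx r hr, hy r hr, add_zero]
          smul_mem' := fun c x hx r hr => by
            rw [map_smul, smul_comm, hx r hr, smul_zero] }
      monotone' := fun m n h x hx r hr => hx r (Ideal.pow_le_pow_right h hr) }
  obtain ⟨n, hn⟩ := monotone_stabilizes_iff_noetherian.2 (inferInstance : IsNoetherian R I) T
  refine ⟨n, fun x => ?_⟩
  obtain ⟨m, hm⟩ := hE (g x)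
  have h1 : x ∈ T (max n m) := T.monotone (le_max_right n m) hm
  rw [← hn _ (le_max_left n m)] at h1
  exact h1

lemma baer_tors [IsNoetherianRing R] (a : Ideal R) (E : Type u) [AddCommGroup E] [Module R E]
    (hE : Module.Injective R E) : Module.Baer R (tors a E) := by
  intro I g
  obtain ⟨n, hn⟩ := bounded a (isTors_tors a E) g
  obtain ⟨k, hk⟩ := Ideal.exists_pow_inf_eq_pow_smul a (I : Submodule R R)
  have hk' := hk (n + k) (by omega)
  rw [Nat.add_sub_cancel] at hk'
  have key : ∀ x (hx : x ∈ I), x ∈ a ^ (n + k) → g ⟨x, hx⟩ = 0 := by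
    intro x hx hxa
    have h1 : x ∈ a ^ n • (I : Submodule R R) := by
      have h2 : x ∈ a ^ (n + k) • (⊤ : Submodule R R) ⊓ I := ⟨by simpa using hxa, hx⟩
      rw [hk'] at h2
      exact Submodule.smul_mono le_rfl inf_le_right h2
    have : ∀ y ∈ a ^ n • (I : Submodule R R), ∃ hy : y ∈ I, g ⟨y, hy⟩ = 0 := by
      intro y hy
      induction hy using Submodule.smul_induction_on' with
      | smul r hr z hz =>
        refine ⟨I.mul_mem_left r hz, ?_⟩
        have := hn ⟨z, hz⟩ r hr
        rw [← map_smul] at this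
        exact this
      | add y _ z _ h1 h2 =>
        obtain ⟨h1, e1⟩ := h1
        obtain ⟨h2, e2⟩ := h2
        refine ⟨I.add_mem h1 h2, ?_⟩
        have := map_add g ⟨y, h1⟩ ⟨z, h2⟩
        rw [e1, e2, add_zero] at this
        exact this
    exact (this x h1).2
  let q : I →ₗ[R] R ⧸ a ^ (n + k) := (Submodule.mkQ (a ^ (n + k))).comp I.subtype
  have hq : LinearMap.ker q ≤ LinearMap.ker ((tors a E).subtype.comp g) := by
    intro x hx
    have h1 : (x : R) ∈ a ^ (n + k) := by
      have : Submodule.mkQ (a ^ (n + k)) (x : R) = 0 := hx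
      exact (Submodule.Quotient.mk_eq_zero _).1 this
    have := key x x.2 h1
    rw [LinearMap.mem_ker, LinearMap.comp_apply]
    erw [this]; simp
  obtain ⟨h, hh⟩ := hE.out ((LinearMap.ker q).liftQ q le_rfl)
    (LinearMap.ker_eq_bot.1 (Submodule.ker_liftQ_eq_bot _ _ _ le_rfl))
    ((LinearMap.ker q).liftQ _ hq)
  refine ⟨LinearMap.codRestrict _ (h.comp (Submodule.mkQ (a ^ (n + k)))) fun y => ⟨n + k, fun r hr => ?_⟩, ?_⟩
  · rw [← map_smul]
    have : r • y ∈ a ^ (n + k) := Ideal.mul_mem_right _ _ hr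
    rw [LinearMap.comp_apply, Submodule.mkQ_apply, (Submodule.Quotient.mk_eq_zero _).2 this, map_zero]
  · intro x hx
    apply Subtype.ext
    have := hh (Submodule.Quotient.mk ⟨x, hx⟩)
    exact this

lemma ses_zero {A B C : Type u} [AddCommGroup A] [Module R A] [AddCommGroup B] [Module R B]
    [AddCommGroup C] [Module R C] (f : A →ₗ[R] B) (g : B →ₗ[R] C) (h : Function.Exact f g) :
    ModuleCat.ofHom f ≫ ModuleCat.ofHom g = 0 := by
  ext x
  exact (h (f x)).2 ⟨x, rfl⟩

lemma ses {A B C : Type u} [AddCommGroup A] [Module R A] [AddCommGroup B] [Module R B]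
    [AddCommGroup C] [Module R C] (f : A →ₗ[R] B) (g : B →ₗ[R] C) (h : Function.Exact f g)
    (hf : Function.Injective f) (hg : Function.Surjective g) :
    (ShortComplex.mk (ModuleCat.ofHom f) (ModuleCat.ofHom g) (ses_zero f g h)).ShortExact where
  exact := (ShortComplex.ShortExact.moduleCat_exact_iff_function_exact _).2 h
  mono_f := (ModuleCat.mono_iff_injective _).2 hf
  epi_g := (ModuleCat.epi_iff_surjective _).2 hg

lemma exists_ses [IsNoetherianRing R] (a : Ideal R) (N : ModuleCat.{u} R) (hN : IsTors a N) :
    ∃ (S : ShortComplex (ModuleCat.{u} R)), S.X₁ = N ∧ S.ShortExact ∧ Injective S.X₂ ∧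
      IsTors a S.X₂ ∧ IsTors a S.X₃ := by
  have hi : Module.Injective R ↑(Injective.under N) :=
    have : Injective (ModuleCat.of R ↑(Injective.under N)) :=
      (inferInstance : Injective (Injective.under N))
    Module.injective_module_of_injective_object _ _
  let j : N →ₗ[R] tors a ↑(Injective.under N) :=
    LinearMap.codRestrict _ (Injective.ι N).hom fun x => by
      obtain ⟨m, hm⟩ := hN x
      exact ⟨m, fun r hr => by rw [← map_smul, hm r hr, map_zero]⟩
  have hj : Function.Injective j := fun x y h =>
    (ModuleCat.mono_iff_injective (Injective.ι N)).1 inferInstance congr(($h).1)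
  have hB := (baer_tors a _ hi).injective
  refine ⟨ShortComplex.mk (ModuleCat.ofHom j) (ModuleCat.ofHom (LinearMap.range j).mkQ) ?_,
    rfl, ?_, ?_, isTors_tors _ _, ?_⟩
  · exact ses_zero _ _ (LinearMap.exact_map_mkQ_range j)
  · exact ses _ _ (LinearMap.exact_map_mkQ_range j) hj (Submodule.mkQ_surjective _)
  · exact Module.injective_object_of_injective_module _ _
  · intro x
    obtain ⟨y, rfl⟩ := Submodule.mkQ_surjective _ x
    obtain ⟨m, hm⟩ := isTors_tors a _ y
    exact ⟨m, fun r hr => by rw [← map_smul, hm r hr, map_zero]⟩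
/-- `R / a ^ t` -/
abbrev XX (a : Ideal R) (t : ℕ) : ModuleCat.{u} R :=
  (localCohomology.ringModIdeals (localCohomology.idealPowersDiagram a)).obj (op t)

abbrev thet (a : Ideal R) {t s : ℕ} (h : t ≤ s) : XX a s ⟶ XX a t :=
  (localCohomology.ringModIdeals (localCohomology.idealPowersDiagram a)).map (homOfLE h).op

lemma thet_comp (a : Ideal R) {t s r : ℕ} (h : t ≤ s) (h' : s ≤ r) :
    thet a h' ≫ thet a h = thet a (h.trans h') := by
  rw [← Functor.map_comp]; rfl

/-- resolutions -/
abbrev PP (a : Ideal R) (t : ℕ) : ProjectiveResolution (XX a t) := projectiveResolution _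

def eps (a : Ideal R) (t : ℕ) : (PP a t).complex.X 0 ⟶ XX a t := (PP a t).π.f 0

lemma d_eps (a : Ideal R) (t : ℕ) : (PP a t).complex.d 1 0 ≫ eps a t = 0 :=
  (PP a t).complex_d_comp_π_f_zero

lemma eps_desc (a : Ideal R) (t : ℕ) {A : ModuleCat.{u} R} (g : (PP a t).complex.X 0 ⟶ A)
    (hg : (PP a t).complex.d 1 0 ≫ g = 0) : ∃ k : XX a t ⟶ A, eps a t ≫ k = g :=
  ⟨(PP a t).exact₀.desc g hg, (PP a t).exact₀.g_desc _ _⟩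

/-- a chain map lifting the projection -/
structure Lft (a : Ideal R) {t s : ℕ} (h : t ≤ s) where
  φ : (PP a s).complex ⟶ (PP a t).complex
  comm : φ.f 0 ≫ eps a t = eps a s ≫ thet a h

def Lft.std (a : Ideal R) {t s : ℕ} (h : t ≤ s) : Lft a h :=
  ⟨ProjectiveResolution.lift (thet a h) _ _, ProjectiveResolution.lift_commutes_zero _ _ _⟩

def Lft.comp {a : Ideal R} {t s r : ℕ} {h : t ≤ s} {h' : s ≤ r} (l : Lft a h) (l' : Lft a h') :
    Lft a (h.trans h') :=
  ⟨l'.φ ≫ l.φ, by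
    rw [HomologicalComplex.comp_f, Category.assoc, l.comm, reassoc_of% l'.comm, thet_comp]⟩

/-- Cocycles of degree n+1 eventually become coboundaries. -/
def Z (a : Ideal R) (n : ℕ) (N : ModuleCat.{u} R) : Prop :=
  ∀ (t : ℕ) (f : (PP a t).complex.X (n+1) ⟶ N), (PP a t).complex.d (n+2) (n+1) ≫ f = 0 →
    ∃ (s : ℕ) (h : t ≤ s) (l : Lft a h) (g : (PP a s).complex.X n ⟶ N),
      l.φ.f (n+1) ≫ f = (PP a s).complex.d (n+1) n ≫ g

variable {a : Ideal R} {S : ShortComplex (ModuleCat.{u} R)}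

lemma lift_sub (hS : S.ShortExact) {P : ModuleCat.{u} R} (k : P ⟶ S.X₂) (hk : k ≫ S.g = 0) :
    ∃ k', k' ≫ S.f = k := by
  have := hS.mono_f
  exact ⟨hS.exact.lift k hk, hS.exact.lift_f k hk⟩

lemma lift_quot (hS : S.ShortExact) {P : ModuleCat.{u} R} [Projective P] (k : P ⟶ S.X₃) :
    ∃ k', k' ≫ S.g = k := by
  have := hS.epi_g
  exact ⟨Projective.factorThru k S.g, by simp⟩

lemma Z_mid (hS : S.ShortExact) (n : ℕ) (h1 : Z a n S.X₁) (h3 : Z a n S.X₃) : Z a n S.X₂ := by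
  have := hS.mono_f
  intro t f hf
  obtain ⟨s, h, l, g, hg⟩ := h3 t (f ≫ S.g) (by rw [reassoc_of% hf, zero_comp])
  obtain ⟨g', rfl⟩ := lift_quot hS g
  obtain ⟨k, hk⟩ := lift_sub hS (l.φ.f (n+1) ≫ f - (PP a s).complex.d (n+1) n ≫ g')
    (by simp [hg])
  obtain ⟨s', h', l', e, he⟩ := h1 s k (by
    rw [← cancel_mono S.f, Category.assoc, hk, Preadditive.comp_sub, ← l.φ.comm_assoc, hf]; simp)
  refine ⟨s', h.trans h', l.comp l', e ≫ S.f + l'.φ.f n ≫ g', ?_⟩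
  have := congr($he ≫ S.f)
  rw [Category.assoc, hk] at this
  simp only [Preadditive.comp_sub, Category.assoc, sub_eq_iff_eq_add] at this
  simp [Lft.comp, this]

lemma Z_right (hS : S.ShortExact) (n : ℕ) (h1 : Z a (n+1) S.X₁) (h2 : Z a n S.X₂) : Z a n S.X₃ := by
  have := hS.mono_f
  intro t f hf
  obtain ⟨f', rfl⟩ := lift_quot hS f
  obtain ⟨k, hk⟩ := lift_sub hS ((PP a t).complex.d (n+2) (n+1) ≫ f') (by simpa using hf)
  obtain ⟨s, h, l, g, hg⟩ := h1 t k (by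
    rw [← cancel_mono S.f, Category.assoc, hk]; simp)
  have hg' := congr($hg ≫ S.f)
  rw [Category.assoc, hk] at hg'
  obtain ⟨s', h', l', e, he⟩ := h2 s (l.φ.f (n+1) ≫ f' - g ≫ S.f) (by
    rw [Preadditive.comp_sub, sub_eq_zero]
    simpa using hg')
  refine ⟨s', h.trans h', l.comp l', e ≫ S.g, ?_⟩
  have := congr($he ≫ S.g)
  simpa [Lft.comp] using this

lemma Z_left (hS : S.ShortExact) (n : ℕ) [Injective S.X₂] (h3 : Z a n S.X₃) : Z a (n+1) S.X₁ := by
  have := hS.mono_f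
  intro t f hf
  have hex : (ShortComplex.mk ((PP a t).complex.d (n+3) (n+2)) ((PP a t).complex.d (n+2) (n+1))
    (by simp)).Exact := (PP a t).exact_succ (n+1)
  let g := hex.descToInjective (f ≫ S.f) (by rw [reassoc_of% hf, zero_comp])
  have hg : (PP a t).complex.d (n+2) (n+1) ≫ g = f ≫ S.f := hex.comp_descToInjective _ _
  obtain ⟨s, h, l, k, hk⟩ := h3 t (g ≫ S.g) (by rw [reassoc_of% hg]; simp)
  obtain ⟨k', rfl⟩ := lift_quot hS k
  obtain ⟨e, he⟩ := lift_sub hS (l.φ.f (n+1) ≫ g - (PP a s).complex.d (n+1) n ≫ k')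
    (by simp [hk])
  refine ⟨s, h, l, e, ?_⟩
  rw [← cancel_mono S.f, Category.assoc, Category.assoc, he, Preadditive.comp_sub, ← l.φ.comm_assoc, hg]
  simp

lemma Z_base (hS : S.ShortExact) [Injective S.X₂] (h2 : IsTors a S.X₂) : Z a 0 S.X₁ := by
  have := hS.mono_f
  intro t f hf
  have hex : (ShortComplex.mk ((PP a t).complex.d 2 1) ((PP a t).complex.d 1 0)
    (by simp)).Exact := (PP a t).exact_succ 0
  let g := hex.descToInjective (f ≫ S.f) (by rw [reassoc_of% hf, zero_comp])
  have hg : (PP a t).complex.d 1 0 ≫ g = f ≫ S.f := hex.comp_descToInjective _ _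
  obtain ⟨k, hk⟩ : ∃ k : XX a t ⟶ S.X₃, eps a t ≫ k = g ≫ S.g := 
    eps_desc a t _ (by rw [reassoc_of% hg]; simp)
  obtain ⟨s, h, k', hk'⟩ : ∃ (s : ℕ) (h : t ≤ s) (k' : XX a s ⟶ S.X₂), k' ≫ S.g = thet a h ≫ k := by
    obtain ⟨e, he⟩ := (ModuleCat.epi_iff_surjective S.g).1 hS.epi_g (k.hom (Submodule.mkQ (a ^ t) 1))
    obtain ⟨m, hm⟩ := h2 e
    refine ⟨max t m, le_max_left _ _, ModuleCat.ofHom (Submodule.liftQ (a ^ (max t m))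
      (LinearMap.toSpanSingleton R _ e) ?_), ?_⟩
    · intro r hr
      exact hm r (Ideal.pow_le_pow_right (le_max_right _ _) hr)
    · apply ModuleCat.hom_ext
      apply Submodule.linearMap_qext
      apply LinearMap.ext_ring
      refine Eq.trans ?_ he
      change S.g.hom ((1:R) • e) = _
      rw [one_smul]
  let l := Lft.std a h
  obtain ⟨e, he⟩ := lift_sub hS (l.φ.f 0 ≫ g - eps a s ≫ k')
    (by 
      rw [Preadditive.sub_comp, Category.assoc, Category.assoc, ← hk]
      rw [hk', reassoc_of% l.comm, sub_self])
  refine ⟨s, h, l, e, ?_⟩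
  rw [← cancel_mono S.f, Category.assoc, Category.assoc, he, Preadditive.comp_sub, ← l.φ.comm_assoc, hg,
    reassoc_of% d_eps]
  simp

lemma Z_tors [IsNoetherianRing R] (n : ℕ) : ∀ (N : ModuleCat.{u} R), IsTors a N → Z a n N := by
  induction n with
  | zero =>
    intro N hN
    obtain ⟨S, rfl, hS, hi, h2, h3⟩ := exists_ses a N hN
    exact Z_base hS h2
  | succ n ih =>
    intro N hN
    obtain ⟨S, rfl, hS, hi, h2, h3⟩ := exists_ses a N hN
    exact Z_left hS n (ih _ h3)

lemma subsing_iff (a : Ideal R) (n : ℕ) (N : ModuleCat.{u} R) :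
    Subsingleton ((localCohomology a (n+1)).obj N) ↔ Z a n N := by
  let D := localCohomology.diagram (localCohomology.idealPowersDiagram a) (n+1)
  let G := D ⋙ (evaluation _ _).obj N
  let F : ModuleCat.{u} R ⥤ (ModuleCat.{u} R)ᵒᵖ := ((linearYoneda R (ModuleCat.{u} R)).obj N).rightOp
  have hpres : PreservesFilteredColimitsOfSize.{0,0} (forget (ModuleCat.{u} R)) :=
    preservesFilteredColimitsOfSize_shrink.{0,u,0,u} _
  let i : (localCohomology a (n+1)).obj N ≅ colimit G := colimitObjIsoColimitCompEvaluation D N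
  have e := i.toLinearEquiv.toEquiv.subsingleton_congr
  rw [e]
  have rep : ∀ (t : ℕ), ∀ x : G.obj (op (op t)), ∃ f, Rep F (PP a t) (n+1) x f ∧ 
      (PP a t).complex.d (n+2) (n+1) ≫ f = 0 := fun t x => 
    Rep.exists_cocycle (F := F) (PP a t) (n+1) x
  have key : ∀ (t s : ℕ) (h : t ≤ s) (x : G.obj (op (op t))) f, Rep F (PP a t) (n+1) x f →
      ∀ (l : Lft a h), (G.map (homOfLE h).op.op).hom x = 0 ↔ 
        ∃ g, l.φ.f (n+1) ≫ f = (PP a s).complex.d (n+1) n ≫ g := by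
    intro t s h x f hx l
    have h1 := hx.map (P' := PP a s) (thet a h) l.φ l.comm
    refine (Rep.eq_zero_iff h1).trans (exists_congr fun g => eq_comm)
  constructor
  · intro hsub t f hf
    obtain ⟨x, hx⟩ := Rep.exists_class (F := F) (PP a t) (n+1) f hf
    have h0 : colimit.ι G (op (op t)) x = 0 := Subsingleton.elim _ _
    obtain ⟨s, h, hs⟩ := Concrete.colimit_rep_eq_zero R G _ x h0
    have hle : t ≤ s.unop.unop := h.unop.unop.le
    obtain ⟨g, hg⟩ := (key t s.unop.unop hle x f hx (Lft.std a hle)).1 hs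
    exact ⟨_, hle, _, g, hg⟩
  · intro hZ
    refine subsingleton_of_forall_eq 0 fun y => ?_
    obtain ⟨t, x, rfl⟩ := Concrete.colimit_exists_rep G y
    obtain ⟨f, hx, hf⟩ := rep t.unop.unop x
    obtain ⟨s, h, l, g, hg⟩ := hZ _ f hf
    have hz := (key _ s h x f hx l).2 ⟨g, hg⟩
    have hw := colimit.w G (homOfLE h).op.op
    have hw' := congr($(hw).hom x)
    refine hw'.symm.trans ?_
    refine Eq.trans (congrArg (colimit.ι G (op (op s))).hom hz) (map_zero _)

lemma sSup_congr_pos (p q : ℕ → Prop) (h : ∀ n, p (n+1) ↔ q (n+1)) :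
    sSup {n : ℕ∞ | ∃ i : ℕ, n = i ∧ p i} ≤ sSup {n : ℕ∞ | ∃ i : ℕ, n = i ∧ q i} := by
  refine sSup_le ?_
  rintro _ ⟨i, rfl, hi⟩
  cases i with
  | zero => simp
  | succ n => exact le_sSup ⟨n+1, rfl, (h n).1 hi⟩

end LCaux

end LCauxSection

variable {R : Type u} [CommRing R] [IsNoetherianRing R]
variable {M : Type u} [AddCommGroup M] [Module R M] [Module.Finite R M] [Nontrivial M]

theorem stmt6 (a b : Ideal R) (h : Ideal.IsLinkedBy M ⊥ a b) :
    cohDim a M = cohDim a (M ⧸ (b • (⊤ : Submodule R M))) := by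
  obtain ⟨-, -, -, -, hb, -⟩ := h
  set N := b • (⊤ : Submodule R M) with hN
  have htors : LCaux.IsTors a N := by
    intro x
    refine ⟨1, fun r hr => Subtype.ext ?_⟩
    have hx : (x : M) ∈ Submodule.modColon ((⊥ : Ideal R) • (⊤ : Submodule R M)) a := by
      rw [hb]; exact x.2
    rw [pow_one] at hr
    simp only [Submodule.modColon, Submodule.mem_iInf, Submodule.bot_smul] at hx
    exact hx r hr
  have hS := LCaux.ses N.subtype N.mkQ (LinearMap.exact_subtype_mkQ N) N.subtype_injective
    N.mkQ_surjective
  have key : ∀ n, Nontrivial ((localCohomology a (n+1)).obj (ModuleCat.of R M)) ↔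
      Nontrivial ((localCohomology a (n+1)).obj (ModuleCat.of R (M ⧸ N))) := by
    intro n
    rw [← not_iff_not, not_nontrivial_iff_subsingleton, not_nontrivial_iff_subsingleton,
      LCaux.subsing_iff, LCaux.subsing_iff]
    exact ⟨LCaux.Z_right hS n (LCaux.Z_tors (n+1) _ htors),
      LCaux.Z_mid hS n (LCaux.Z_tors n _ htors)⟩
  exact le_antisymm (LCaux.sSup_congr_pos _ _ key) (LCaux.sSup_congr_pos _ _ fun n => (key n).symm)
end
end

section
/- Let a and b be ideals linked by I over M. Then the quotient module M/aM embeds into a finite direct sum of copies of M/IM. -/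
universe u

open RingTheory.Sequence CategoryTheory

noncomputable section

variable {R : Type u} [CommRing R] [IsNoetherianRing R]
variable {M : Type u} [AddCommGroup M] [Module R M] [Module.Finite R M] [Nontrivial M]

theorem stmt7 (I a b : Ideal R) (h : Ideal.IsLinkedBy M I a b) :
    ∃ (n : ℕ)
      (f : (M ⧸ (a • (⊤ : Submodule R M))) →ₗ[R]
        (Fin n → M ⧸ (I • (⊤ : Submodule R M)))),
      Function.Injective f := by
  obtain ⟨-, -, -, -, -, hb⟩ := h
  obtain ⟨n, s, hs⟩ := Submodule.fg_iff_exists_fin_generating_family.mp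
    (IsNoetherian.noetherian b)
  let g : M →ₗ[R] (Fin n → M ⧸ (I • (⊤ : Submodule R M))) :=
    LinearMap.pi fun i => (I • (⊤ : Submodule R M)).mkQ ∘ₗ LinearMap.lsmul R M (s i)
  have hmem : ∀ m : M, m ∈ LinearMap.ker g ↔ ∀ i, s i • m ∈ I • (⊤ : Submodule R M) := by
    intro m
    rw [LinearMap.mem_ker, funext_iff]
    refine forall_congr' fun i => ?_
    exact Submodule.Quotient.mk_eq_zero _
  have hker : LinearMap.ker g = a • (⊤ : Submodule R M) := by
    rw [← hb]
    ext m
    rw [hmem]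
    simp only [Submodule.modColon, Submodule.mem_iInf, Submodule.mem_comap,
      LinearMap.lsmul_apply]
    constructor
    · intro hm r hr
      rw [← hs] at hr
      induction hr using Submodule.span_induction with
      | mem x hx => obtain ⟨i, rfl⟩ := hx; exact hm i
      | zero => rw [zero_smul]; exact Submodule.zero_mem _
      | add x y _ _ hx hy => rw [add_smul]; exact Submodule.add_mem _ hx hy
      | smul c x _ hx => rw [smul_assoc]; exact Submodule.smul_mem _ c hx
    · intro hm i
      exact hm _ (hs ▸ Submodule.subset_span ⟨i, rfl⟩)
  refine ⟨n, (a • (⊤ : Submodule R M)).liftQ g hker.ge, ?_⟩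
  rw [← LinearMap.ker_eq_bot]
  exact Submodule.ker_liftQ_eq_bot _ _ _ hker.le
end
end

section
/- Let a be an ideal linked by I over M. Then Ass_R(M/aM) ⊆ Ass_R(M/IM). -/
universe u

open RingTheory.Sequence CategoryTheory

noncomputable section

variable {R : Type u} [CommRing R] [IsNoetherianRing R]
variable {M : Type u} [AddCommGroup M] [Module R M] [Module.Finite R M] [Nontrivial M]

theorem stmt8 (I a : Ideal R) (h : ∃ b, Ideal.IsLinkedBy M I a b) :
    associatedPrimes R (M ⧸ (a • (⊤ : Submodule R M))) ⊆
      associatedPrimes R (M ⧸ (I • (⊤ : Submodule R M))) := by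
  obtain ⟨b, -, -, -, -, -, hb⟩ := h
  have mem_a : ∀ m : M, m ∈ a • (⊤ : Submodule R M) ↔
      ∀ r ∈ b, r • m ∈ I • (⊤ : Submodule R M) := by
    intro m
    rw [← hb]
    simp [Submodule.modColon, Submodule.mem_iInf]
  obtain ⟨s, hs⟩ := (inferInstance : IsNoetherianRing R).noetherian b
  intro p hp
  rw [AssociatedPrimes.mem_iff, isAssociatedPrime_iff] at hp
  obtain ⟨hpp, y, hy⟩ := hp
  obtain ⟨x, rfl⟩ := Submodule.Quotient.mk_surjective _ y
  have memp : ∀ r : R, r ∈ p ↔ ∀ t ∈ b, t • (r • x) ∈ I • (⊤ : Submodule R M) := by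
    intro r
    rw [hy, Submodule.mem_colon_singleton, Submodule.mem_bot, ← Submodule.Quotient.mk_smul,
      Submodule.Quotient.mk_eq_zero, mem_a]
  have hle : (s.inf fun t => (I • (⊤ : Submodule R M)).colon {t • x}) ≤ p := by
    intro r hr
    rw [memp]
    have key : b ≤ (I • (⊤ : Submodule R M)).colon {r • x} := by
      rw [← hs]
      refine Submodule.span_le.2 fun t ht => ?_
      have h1 := (Finset.inf_le (f := fun t => (I • (⊤ : Submodule R M)).colon {t • x}) ht) hr
      rw [Submodule.mem_colon_singleton] at h1
      rw [SetLike.mem_coe, Submodule.mem_colon_singleton, smul_comm]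
      exact h1
    intro t ht
    exact Submodule.mem_colon_singleton.1 (key ht)
  obtain ⟨t, ht, htp⟩ := (Ideal.IsPrime.inf_le' hpp).1 hle
  rw [AssociatedPrimes.mem_iff, isAssociatedPrime_iff]
  refine ⟨hpp, Submodule.Quotient.mk (t • x), ?_⟩
  ext r
  rw [Submodule.mem_colon_singleton, Submodule.mem_bot, ← Submodule.Quotient.mk_smul,
      Submodule.Quotient.mk_eq_zero]
  constructor
  · intro hr
    rw [smul_comm]
    exact (memp r).1 hr t (hs ▸ Submodule.subset_span ht)
  · intro hr
    exact htp (Submodule.mem_colon_singleton.2 hr)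
end
end
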